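/- arXiv:1101.1488 — 2 statements merged into one kernel-verified Lean document; each statement's English description precedes it below -/
import Mathlib

section
/- Szemerédi–Trotter Theorem (rich-lines form): There is an absolute constant C > 0 with the following property. Let S be a set of n points in the Euclidean plane ℝ², let 𝓛 be a finite set of lines in ℝ², and let k ≥ 2. Then the number of lines in 𝓛 that are each incident on at least k points of S is at most C · (n²/k³ + n/k). -/
open Set

noncomputable section

/-- The line through two points of the plane, as a set. -/
def lineThrough (p q : ℝ × ℝ) : Set (ℝ × ℝ) := (affineSpan ℝ {p, q} : AffineSubspace ℝ (ℝ × ℝ))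

/-- A subset of the plane is a line if it is the affine span of two distinct points. -/
def IsLine (L : Set (ℝ × ℝ)) : Prop := ∃ p q : ℝ × ℝ, p ≠ q ∧ L = lineThrough p q

/-- The richness of a line `L` with respect to a finite point set `S`:
the number of points of `S` incident on `L`. -/
def richness (S : Finset (ℝ × ℝ)) (L : Set (ℝ × ℝ)) : ℕ := ((S : Set (ℝ × ℝ)) ∩ L).ncard

/-- The lines induced by a finite point set `S`: lines passing through
at least two distinct points of `S`. -/
def InducedLines (S : Finset (ℝ × ℝ)) : Set (Set (ℝ × ℝ)) :=
  {L | IsLine L ∧ ∃ p ∈ S, ∃ q ∈ S, p ≠ q ∧ p ∈ L ∧ q ∈ L}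

/-- The bichromatic induced lines of a bichromatic point set `(P, Q)`:
lines incident on at least one point of `P` and at least one point of `Q`
(for disjoint `P`, `Q` such a line passes through two distinct points of `P ∪ Q`). -/
def BichromLines (P Q : Finset (ℝ × ℝ)) : Set (Set (ℝ × ℝ)) :=
  {L | IsLine L ∧ (∃ p ∈ P, p ∈ L) ∧ (∃ q ∈ Q, q ∈ L)}

/-!
Join the consecutive points on each of the `m` rich lines: this gives a straight-line drawing with
`n` vertices and at least `m * (k - 1)` edges. Distinct lines meet at most once, so at most `m ^ 2`
ordered pairs of edges cross.

A drawing without crossings has at most `3 * n` edges: an edge that is not the steepest one at its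
left endpoint is charged to the leftmost vertex `w` in the wedge between it and the next steeper
edge of the same fan, and every vertex receives at most two charges, because either the edge itself
is the one directly below `w` or its successor is the one directly above `w`. Deleting crossing
edges and sampling the vertices at random turns this into the crossing lemma
`e ^ 3 ≤ 72 * n ^ 2 * c`, and the bound `c ≤ m ^ 2` yields the theorem.

A shear makes the abscissas of the points distinct, so that no rich line is vertical. Only the order
and the field operations are involved, hence any linearly ordered field may replace the reals.
-/

open scoped Finset

namespace SzemerediTrotter

lemma eq_of_affine_eq_of_affine_eq {R : Type*} [CommRing R] [IsDomain R] {l l' : R × R} {s t : R}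
    (hst : s ≠ t) (hs : l.1 * s + l.2 = l'.1 * s + l'.2) (ht : l.1 * t + l.2 = l'.1 * t + l'.2) :
    l = l' := by
  have hslope : l.1 = l'.1 := by
    refine mul_right_cancel₀ (sub_ne_zero.2 hst) ?_
    linear_combination hs - ht
  refine Prod.ext hslope ?_
  rw [hslope] at hs
  exact add_left_cancel hs

section Sampling

variable {V R : Type*} [DecidableEq V] [CommRing R]

/-- The probability that a random subset of `S`, containing each element independently with
probability `p`, equals `A`. It is meaningful for `A ⊆ S` only, as the subtraction truncates. -/
def sampleWeight (p : R) (S A : Finset V) : R := p ^ #A * (1 - p) ^ (#S - #A)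

lemma sum_sampleWeight_superset (p : R) {S T : Finset V} (hT : T ⊆ S) :
    ∑ A ∈ S.powerset with T ⊆ A, sampleWeight p S A = p ^ #T := by
  have hIcc : {A ∈ S.powerset | T ⊆ A} = (S \ T).powerset.image (T ∪ ·) := by
    rw [← Finset.Icc_eq_image_powerset hT]
    ext A
    simp [and_comm]
  have hdisj {B : Finset V} (hB : B ∈ (S \ T).powerset) : Disjoint T B :=
    Finset.disjoint_sdiff.mono_right (Finset.mem_powerset.1 hB)
  have hinj : InjOn (T ∪ ·) ((S \ T).powerset : Set (Finset V)) := fun B hB B' hB' hBB' => by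
    rw [← Finset.union_sdiff_cancel_left (hdisj hB), ← Finset.union_sdiff_cancel_left (hdisj hB')]
    exact congrArg (· \ T) hBB'
  calc ∑ A ∈ S.powerset with T ⊆ A, sampleWeight p S A
      = ∑ B ∈ (S \ T).powerset, p ^ #T * (p ^ #B * (1 - p) ^ (#(S \ T) - #B)) := by
        rw [hIcc, Finset.sum_image hinj]
        refine Finset.sum_congr rfl fun B hB => ?_
        rw [sampleWeight, Finset.card_union_of_disjoint (hdisj hB),
          Finset.card_sdiff_of_subset hT, Nat.sub_sub, pow_add, mul_assoc]
    _ = p ^ #T := by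
        rw [← Finset.mul_sum, Finset.sum_pow_mul_eq_add_pow, add_sub_cancel, one_pow, mul_one]

lemma sum_sampleWeight_mul_card {ι : Type*} (p : R) {S : Finset V} (X : Finset ι)
    {T : ι → Finset V} {j : ℕ} (hT : ∀ i ∈ X, T i ⊆ S) (hcard : ∀ i ∈ X, #(T i) = j) :
    ∑ A ∈ S.powerset, sampleWeight p S A * #{i ∈ X | T i ⊆ A} = p ^ j * #X := by
  calc ∑ A ∈ S.powerset, sampleWeight p S A * #{i ∈ X | T i ⊆ A}
      = ∑ i ∈ X, ∑ A ∈ S.powerset with T i ⊆ A, sampleWeight p S A := by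
        simp_rw [Finset.card_filter, Nat.cast_sum, Finset.mul_sum, Finset.sum_filter]
        rw [Finset.sum_comm]
        simp
    _ = ∑ _i ∈ X, p ^ j :=
        Finset.sum_congr rfl fun i hi => by rw [sum_sampleWeight_superset p (hT i hi), hcard i hi]
    _ = p ^ j * #X := by rw [Finset.sum_const, nsmul_eq_mul, mul_comm]

end Sampling

section Shear

variable {K : Type*} [Field K]

/-- The horizontal shear `(x, y) ↦ (x + t * y, y)`. -/
def shear (t : K) : K × K →ₗ[K] K × K :=
  (LinearMap.fst K K K + t • LinearMap.snd K K K).prod (LinearMap.snd K K K)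

lemma shear_apply (t : K) (p : K × K) : shear t p = (p.1 + t * p.2, p.2) := rfl

lemma shear_injective (t : K) : Function.Injective (shear t) := fun p q h => by
  obtain ⟨hfst, hsnd⟩ := Prod.ext_iff.1 h
  simp only [shear_apply] at hfst hsnd
  rw [hsnd] at hfst
  exact Prod.ext (add_right_cancel hfst) hsnd

lemma exists_injOn_fst_shear [Infinite K] (S : Finset (K × K)) :
    ∃ t : K, InjOn (fun p => (shear t p).1) (S : Set (K × K)) := by
  classical
  obtain ⟨t, ht⟩ := Infinite.exists_notMem_finset
    ((S ×ˢ S).image fun pq => (pq.2.1 - pq.1.1) / (pq.1.2 - pq.2.2))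
  refine ⟨t, fun p hp q hq h => ?_⟩
  simp only [shear_apply] at h
  by_cases hsnd : p.2 = q.2
  · rw [hsnd] at h
    exact Prod.ext (add_right_cancel h) hsnd
  · refine absurd (Finset.mem_image.2 ⟨(p, q), Finset.mk_mem_product hp hq, ?_⟩) ht
    rw [div_eq_iff (sub_ne_zero.2 hsnd)]
    linear_combination -h

lemma exists_mem_line_iff {p q : K × K} (hpq : p.1 ≠ q.1) :
    ∃ l : K × K, ∀ z, z ∈ line[K, p, q] ↔ z.2 = l.1 * z.1 + l.2 := by
  have hsub : q.1 - p.1 ≠ 0 := sub_ne_zero.2 hpq.symm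
  refine ⟨((q.2 - p.2) / (q.1 - p.1), p.2 - (q.2 - p.2) / (q.1 - p.1) * p.1), fun z => ?_⟩
  rw [mem_affineSpan_pair_iff_exists_lineMap_eq]
  constructor
  · rintro ⟨c, rfl⟩
    simp only [AffineMap.lineMap_apply, vsub_eq_sub, vadd_eq_add, Prod.fst_add, Prod.snd_add,
      Prod.smul_fst, Prod.smul_snd, Prod.fst_sub, Prod.snd_sub, smul_eq_mul]
    field_simp
    ring
  · intro hz
    refine ⟨(z.1 - p.1) / (q.1 - p.1), Prod.ext ?_ ?_⟩ <;>
    simp only [hz, AffineMap.lineMap_apply, vsub_eq_sub, vadd_eq_add, Prod.fst_add, Prod.snd_add,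
      Prod.smul_fst, Prod.smul_snd, Prod.fst_sub, Prod.snd_sub, smul_eq_mul] <;>
    field_simp <;> ring

lemma exists_mem_line_iff_shear {a b p q : K × K} (t : K) (hp : p ∈ line[K, a, b])
    (hq : q ∈ line[K, a, b]) (hpq : (shear t p).1 ≠ (shear t q).1) :
    ∃ l : K × K, ∀ z, z ∈ line[K, a, b] ↔ (shear t z).2 = l.1 * (shear t z).1 + l.2 := by
  have hne : p ≠ q := ne_of_apply_ne (fun z => (shear t z).1) hpq
  obtain ⟨l, hl⟩ := exists_mem_line_iff hpq
  refine ⟨l, fun z => ?_⟩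
  rw [← hl, ← affineSpan_pair_eq_of_mem_of_mem_of_ne hp hq hne,
    ← AffineSubspace.mem_map_iff_mem_of_injective (f := (shear t).toAffineMap) (shear_injective t),
    AffineSubspace.map_span, image_pair]
  rfl

end Shear

/-- A nonvertical segment in the plane over `K`, oriented from left to right. Segments serve as the
edges of straight-line drawings of graphs. -/
@[ext]
structure Edge (K : Type*) [LT K] where
  left : K × K
  right : K × K
  left_lt_right : left.1 < right.1

variable {K : Type*} [LinearOrder K]

namespace Edge

/-- The open interval of abscissas over which the relative interior of the edge lies. -/
def span (e : Edge K) : Set K := Ioo e.left.1 e.right.1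

/-- The two endpoints of the edge, as a finite set. -/
def endpoints (e : Edge K) : Finset (K × K) := {e.left, e.right}

lemma mem_endpoints {e : Edge K} {v : K × K} : v ∈ e.endpoints ↔ v = e.left ∨ v = e.right := by
  simp [endpoints]

lemma card_endpoints (e : Edge K) : #e.endpoints = 2 :=
  Finset.card_pair fun h => e.left_lt_right.ne (congrArg Prod.fst h)

lemma endpoints_subset_iff {e : Edge K} {A : Finset (K × K)} :
    e.endpoints ⊆ A ↔ e.left ∈ A ∧ e.right ∈ A := by
  simp [endpoints, Finset.insert_subset_iff]

variable [Field K]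

/-- The slope of the line supporting the edge. -/
def slope (e : Edge K) : K := (e.right.2 - e.left.2) / (e.right.1 - e.left.1)

/-- The ordinate at abscissa `s` of the line supporting the edge; `s` may lie outside the span. -/
def height (e : Edge K) (s : K) : K := e.left.2 + e.slope * (s - e.left.1)

/-- Two distinct edges cross if their relative interiors meet; overlapping collinear edges count as
crossing. -/
def Crosses (e f : Edge K) : Prop := e ≠ f ∧ ∃ s ∈ e.span ∩ f.span, e.height s = f.height s

/-- The point `w` lies vertically above the relative interior of the edge. -/
def PassesBelow (e : Edge K) (w : K × K) : Prop := w.1 ∈ e.span ∧ e.height w.1 < w.2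

/-- The point `w` lies vertically below the relative interior of the edge. -/
def PassesAbove (e : Edge K) (w : K × K) : Prop := w.1 ∈ e.span ∧ w.2 < e.height w.1

/-- The region between two edges with a common left endpoint, the first one below the second,
cut off vertically where the shorter of them ends. The common endpoint is excluded. -/
def wedge (e e' : Edge K) : Set (K × K) :=
  {p | p.1 ∈ Ioc e.left.1 (min e.right.1 e'.right.1) ∧ p.2 ∈ Icc (e.height p.1) (e'.height p.1)}

@[simp]
lemma height_left (e : Edge K) : e.height e.left.1 = e.left.2 := by
  simp [height]

lemma height_eq_of_left_eq_of_slope_eq {e f : Edge K} (hleft : e.left = f.left)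
    (hslope : e.slope = f.slope) (s : K) : e.height s = f.height s := by
  rw [height, height, hleft, hslope]

@[simp]
lemma height_right (e : Edge K) : e.height e.right.1 = e.right.2 := by
  have : e.right.1 - e.left.1 ≠ 0 := sub_ne_zero.2 e.left_lt_right.ne'
  rw [height, slope]
  field_simp
  ring

lemma height_eq_of_eq_of_eq {e f : Edge K} {a b : K} (hab : a ≠ b) (ha : e.height a = f.height a)
    (hb : e.height b = f.height b) (s : K) : e.height s = f.height s := by
  have hslope : e.slope = f.slope := by
    refine mul_right_cancel₀ (sub_ne_zero.2 hab) ?_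
    simp only [height] at ha hb
    linear_combination ha - hb
  simp only [height, hslope] at ha ⊢
  linear_combination ha

variable [IsStrictOrderedRing K]

lemma slope_lt_slope_iff {e f : Edge K} (hleft : e.left = f.left) {s : K} (hs : e.left.1 < s) :
    e.slope < f.slope ↔ e.height s < f.height s := by
  rw [height, height, ← hleft, add_lt_add_iff_left, mul_lt_mul_iff_left₀ (sub_pos.2 hs)]

lemma exists_height_eq_of_lt_of_lt {e f : Edge K} {a b : K} (hab : a < b)
    (ha : e.height a < f.height a) (hb : f.height b < e.height b) :
    ∃ s ∈ Ioo a b, e.height s = f.height s := by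
  have hslope : 0 < e.slope - f.slope := by
    simp only [height] at ha hb
    nlinarith
  refine ⟨a + (f.height a - e.height a) / (e.slope - f.slope), ⟨?_, ?_⟩, ?_⟩
  · have := div_pos (sub_pos.2 ha) hslope
    linarith
  · rw [← lt_sub_iff_add_lt', div_lt_iff₀ hslope]
    simp only [height] at hb ⊢
    linarith
  · simp only [height]
    field_simp
    ring

lemma height_le_height_of_not_crosses {e f : Edge K} (hef : ¬ e.Crosses f) {a s : K} (has : a ≤ s)
    (hea : e.left.1 ≤ a) (hfa : f.left.1 ≤ a) (hes : s ≤ e.right.1) (hfs : s ≤ f.right.1)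
    (hlt : e.height s < f.height s) : e.height a ≤ f.height a := by
  by_contra! hgt
  have has' : a < s := has.lt_of_ne fun h => by subst h; exact hlt.not_gt hgt
  obtain ⟨t, ⟨hat, hts⟩, ht⟩ := exists_height_eq_of_lt_of_lt has' hgt hlt
  exact hef ⟨fun h => hlt.ne (h ▸ rfl), t, ⟨⟨hea.trans_lt hat, hts.trans_le hes⟩,
    ⟨hfa.trans_lt hat, hts.trans_le hfs⟩⟩, ht.symm⟩

end Edge

/-- `e` joins two points of `T` with no further point of `T` strictly between their abscissas. -/
def IsConsecutive (T : Finset (K × K)) (e : Edge K) : Prop :=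
  (e.left ∈ T ∧ e.right ∈ T) ∧ ∀ w ∈ T, w.1 ∉ e.span

lemma exists_isConsecutive {T : Finset (K × K)} {u m : K × K} (hu : u ∈ T) (hm : m ∈ T)
    (hum : u.1 < m.1) : ∃ e, e.left = u ∧ IsConsecutive T e := by
  obtain ⟨v, hv, hmin⟩ := Finset.exists_min_image {v ∈ T | u.1 < v.1} Prod.fst
    ⟨m, Finset.mem_filter.2 ⟨hm, hum⟩⟩
  obtain ⟨hvT, huv⟩ := Finset.mem_filter.1 hv
  exact ⟨⟨u, v, huv⟩, rfl, ⟨hu, hvT⟩, fun w hw hspan =>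
    (hmin w (Finset.mem_filter.2 ⟨hw, hspan.1⟩)).not_gt hspan.2⟩

lemma exists_finset_isConsecutive {T : Finset (K × K)} (hT : InjOn Prod.fst (T : Set (K × K))) :
    ∃ E : Finset (Edge K), #T ≤ #E + 1 ∧ ∀ e ∈ E, IsConsecutive T e := by
  classical
  rcases T.eq_empty_or_nonempty with rfl | hne
  · exact ⟨∅, by simp⟩
  obtain ⟨m, hm, hmax⟩ := Finset.exists_max_image T Prod.fst hne
  have hnext (u : {u // u ∈ T.erase m}) : ∃ e, e.left = (u : K × K) ∧ IsConsecutive T e := by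
    obtain ⟨hum, hu⟩ := Finset.mem_erase.1 u.2
    exact exists_isConsecutive hu hm ((hmax u hu).lt_of_ne fun h => hum (hT hu hm h))
  choose next hleft hnext using hnext
  have hinj : Function.Injective next := fun u v huv =>
    Subtype.ext (by rw [← hleft u, ← hleft v, huv])
  refine ⟨Finset.univ.image next, ?_, fun e he => ?_⟩
  · rw [Finset.card_image_of_injective _ hinj, Finset.card_univ, Fintype.card_coe,
      Finset.card_erase_add_one hm]
  · obtain ⟨u, -, rfl⟩ := Finset.mem_image.1 he
    exact hnext u

lemma IsConsecutive.eq {T : Finset (K × K)} (hT : InjOn Prod.fst (T : Set (K × K))) {e f : Edge K}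
    (he : IsConsecutive T e) (hf : IsConsecutive T f) {s : K} (hes : s ∈ e.span)
    (hfs : s ∈ f.span) : e = f := by
  have hleft : e.left.1 = f.left.1 := by
    rcases lt_trichotomy e.left.1 f.left.1 with hlt | heq | hlt
    · exact absurd ⟨hlt, hfs.1.trans hes.2⟩ (he.2 _ hf.1.1)
    · exact heq
    · exact absurd ⟨hlt, hes.1.trans hfs.2⟩ (hf.2 _ he.1.1)
  have hright : e.right.1 = f.right.1 := by
    rcases lt_trichotomy e.right.1 f.right.1 with hlt | heq | hlt
    · exact absurd ⟨hfs.1.trans hes.2, hlt⟩ (hf.2 _ he.1.2)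
    · exact heq
    · exact absurd ⟨hes.1.trans hfs.2, hlt⟩ (he.2 _ hf.1.2)
  exact Edge.ext (hT he.1.1 hf.1.1 hleft) (hT he.1.2 hf.1.2 hright)

variable [Field K]

/-- `A` and `E` are the vertices and edges of a straight-line drawing: no two vertices lie on a
vertical line, the endpoints of the edges are vertices, and no vertex lies in the relative interior
of an edge. Edges may cross. -/
structure IsDrawing (A : Finset (K × K)) (E : Finset (Edge K)) : Prop where
  injOn_fst : InjOn Prod.fst (A : Set (K × K))
  endpoints_subset : ∀ e ∈ E, e.endpoints ⊆ A
  height_ne : ∀ e ∈ E, ∀ w ∈ A, w.1 ∈ e.span → e.height w.1 ≠ w.2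

/-- No two edges of `E` cross. -/
def IsNoncrossing (E : Finset (Edge K)) : Prop := ∀ e ∈ E, ∀ f ∈ E, ¬ e.Crosses f

open Classical in
/-- The ordered pairs of crossing edges of `E`, so that each crossing is counted twice. -/
def crossings (E : Finset (Edge K)) : Finset (Edge K × Edge K) :=
  {p ∈ E ×ˢ E | p.1.Crosses p.2}

lemma mem_crossings {E : Finset (Edge K)} {e f : Edge K} :
    (e, f) ∈ crossings E ↔ (e ∈ E ∧ f ∈ E) ∧ e.Crosses f := by
  simp [crossings]

/-- `f` follows `e` in the fan of edges of `E` having the same left endpoint as `e`, ordered by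
slope. -/
def IsFanSucc (E : Finset (Edge K)) (e f : Edge K) : Prop :=
  MinimalFor (fun g => g ∈ E ∧ g.left = e.left ∧ e.slope < g.slope) Edge.slope f

/-- `e` is the edge of `E` directly below `w`. -/
def IsDirectlyBelow (E : Finset (Edge K)) (e : Edge K) (w : K × K) : Prop :=
  MaximalFor (fun f => f ∈ E ∧ f.PassesBelow w) (fun f => f.height w.1) e

/-- `e` is the edge of `E` directly above `w`. -/
def IsDirectlyAbove (E : Finset (Edge K)) (e : Edge K) (w : K × K) : Prop :=
  MinimalFor (fun f => f ∈ E ∧ f.PassesAbove w) (fun f => f.height w.1) e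

lemma crossings_filter_endpoints_subset (E : Finset (Edge K)) (A : Finset (K × K)) :
    crossings {e ∈ E | e.endpoints ⊆ A} =
      {q ∈ crossings E | q.1.endpoints ∪ q.2.endpoints ⊆ A} := by
  ext ⟨e, f⟩
  simp only [mem_crossings, Finset.mem_filter, Finset.union_subset_iff]
  tauto

variable {A : Finset (K × K)} {E : Finset (Edge K)} {e e' f : Edge K} {w : K × K}

lemma IsDirectlyBelow.eq (hE : IsNoncrossing E) (he : IsDirectlyBelow E e w)
    (hf : IsDirectlyBelow E f w) : e = f := by
  by_contra hne
  exact hE e he.1.1 f hf.1.1 ⟨hne, w.1, ⟨he.1.2.1, hf.1.2.1⟩,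
    (MaximalFor.le hf he.1).antisymm (MaximalFor.le he hf.1)⟩

lemma IsDirectlyAbove.eq (hE : IsNoncrossing E) (he : IsDirectlyAbove E e w)
    (hf : IsDirectlyAbove E f w) : e = f := by
  by_contra hne
  exact hE e he.1.1 f hf.1.1 ⟨hne, w.1, ⟨he.1.2.1, hf.1.2.1⟩,
    (MinimalFor.le he hf.1).antisymm (MinimalFor.le hf he.1)⟩

lemma exists_isFanSucc (hf : f ∈ E) (hleft : f.left = e.left) (hslope : e.slope < f.slope) :
    ∃ e', IsFanSucc E e e' :=
  (E.finite_toSet.subset fun _ hg => hg.1).exists_minimalFor Edge.slope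
    {g | g ∈ E ∧ g.left = e.left ∧ e.slope < g.slope} ⟨f, hf, hleft, hslope⟩

lemma IsDrawing.left_mem (h : IsDrawing A E) (he : e ∈ E) : e.left ∈ A :=
  (Edge.endpoints_subset_iff.1 (h.endpoints_subset e he)).1

lemma IsDrawing.right_mem (h : IsDrawing A E) (he : e ∈ E) : e.right ∈ A :=
  (Edge.endpoints_subset_iff.1 (h.endpoints_subset e he)).2

lemma IsDrawing.mono (h : IsDrawing A E) {A' : Finset (K × K)} {E' : Finset (Edge K)}
    (hA : A' ⊆ A) (hE : E' ⊆ E) (hends : ∀ e ∈ E', e.endpoints ⊆ A') : IsDrawing A' E' where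
  injOn_fst := h.injOn_fst.mono hA
  endpoints_subset := hends
  height_ne e he w hw := h.height_ne e (hE he) w (hA hw)

lemma IsDrawing.eq_of_height_eq (h : IsDrawing A E) (he : e ∈ E) (hf : f ∈ E) {s : K}
    (hes : s ∈ e.span) (hfs : s ∈ f.span) (hheight : ∀ a, e.height a = f.height a) : e = f := by
  have consecutive (g : Edge K) (hg : g ∈ E) (hgh : ∀ a, g.height a = e.height a) :
      IsConsecutive {w ∈ A | e.height w.1 = w.2} g := by
    refine ⟨⟨?_, ?_⟩, fun w hw hspan => ?_⟩
    · simp [h.left_mem hg, ← hgh]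
    · simp [h.right_mem hg, ← hgh]
    · obtain ⟨hwA, hwe⟩ := Finset.mem_filter.1 hw
      exact h.height_ne g hg w hwA hspan (hgh w.1 ▸ hwe)
  exact (consecutive e he fun _ => rfl).eq (h.injOn_fst.mono (Finset.filter_subset _ A))
    (consecutive f hf fun a => (hheight a).symm) hes hfs

lemma IsDrawing.disjoint_endpoints_of_crosses (h : IsDrawing A E) (he : e ∈ E) (hf : f ∈ E)
    (hef : e.Crosses f) : Disjoint e.endpoints f.endpoints := by
  obtain ⟨hne, s, ⟨hes, hfs⟩, hs⟩ := hef
  have not_common : ∀ v : K × K, v.1 ≠ s → e.height v.1 = v.2 → f.height v.1 = v.2 → False :=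
    fun v hvs hev hfv => hne <| h.eq_of_height_eq he hf hes hfs <|
      Edge.height_eq_of_eq_of_eq hvs (hev.trans hfv.symm) hs
  refine Finset.disjoint_left.2 fun v hve hvf => ?_
  rcases Edge.mem_endpoints.1 hve with rfl | rfl <;>
    rcases Edge.mem_endpoints.1 hvf with hv | hv
  · exact not_common e.left hes.1.ne e.height_left (hv ▸ f.height_left)
  · exact not_common e.left hes.1.ne e.height_left (hv ▸ f.height_right)
  · exact not_common e.right hes.2.ne' e.height_right (hv ▸ f.height_left)
  · exact not_common e.right hes.2.ne' e.height_right (hv ▸ f.height_right)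

lemma IsDrawing.card_endpoints_union_endpoints (h : IsDrawing A E) {q : Edge K × Edge K}
    (hq : q ∈ crossings E) : #(q.1.endpoints ∪ q.2.endpoints) = 4 := by
  obtain ⟨⟨he, hf⟩, hef⟩ := mem_crossings.1 hq
  rw [Finset.card_union_of_disjoint (h.disjoint_endpoints_of_crosses he hf hef),
    Edge.card_endpoints, Edge.card_endpoints]

section OrderedField

variable [IsStrictOrderedRing K]

lemma IsDrawing.eq_of_left_eq_of_slope_eq (h : IsDrawing A E) (he : e ∈ E) (hf : f ∈ E)
    (hleft : e.left = f.left) (hslope : e.slope = f.slope) : e = f := by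
  obtain ⟨s, hs, hs'⟩ := exists_between
    (lt_min e.left_lt_right (hleft ▸ f.left_lt_right : e.left.1 < f.right.1))
  obtain ⟨hse, hsf⟩ := lt_min_iff.1 hs'
  exact h.eq_of_height_eq he hf ⟨hs, hse⟩ ⟨hleft ▸ hs, hsf⟩
    (Edge.height_eq_of_left_eq_of_slope_eq hleft hslope)

lemma IsFanSucc.eq (h : IsDrawing A E) (he : e ∈ E) (hf : f ∈ E) (hee' : IsFanSucc E e e')
    (hfe' : IsFanSucc E f e') : e = f := by
  have hleft : e.left = f.left := hee'.1.2.1.symm.trans hfe'.1.2.1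
  refine h.eq_of_left_eq_of_slope_eq he hf hleft (le_antisymm ?_ ?_) <;> by_contra! hlt
  · exact (MinimalFor.le hfe' ⟨he, hleft, hlt⟩).not_gt hee'.1.2.2
  · exact (MinimalFor.le hee' ⟨hf, hleft.symm, hlt⟩).not_gt hfe'.1.2.2

lemma IsFanSucc.height_lt (hee' : IsFanSucc E e e') {s : K} (hs : e.left.1 < s) :
    e.height s < e'.height s :=
  (Edge.slope_lt_slope_iff hee'.1.2.1.symm hs).1 hee'.1.2.2

-- Follow `f` to the left from the point where it is strictly inside the wedge. It cannot cross
-- `e` or `e'`, so it must start inside the wedge: it can neither pass through the apex, which is a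
-- vertex, nor start there, since no edge of the fan lies between `e` and `e'`.
lemma IsFanSucc.left_mem_wedge (h : IsDrawing A E) (hE : IsNoncrossing E) (he : e ∈ E)
    (hf : f ∈ E) (hee' : IsFanSucc E e e') {s : K} (hs : s ∈ f.span)
    (hs' : s ∈ Ioc e.left.1 (min e.right.1 e'.right.1))
    (hef : e.height s < f.height s) (hfe' : f.height s < e'.height s) :
    f.left ∈ e.wedge e' ∧ f.left.1 < s := by
  have he' : e' ∈ E := hee'.1.1
  have hleft : e'.left = e.left := hee'.1.2.1
  obtain ⟨hse, hse'⟩ := le_min_iff.1 hs'.2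
  have e_le_f {a : K} (hea : e.left.1 ≤ a) (hfa : f.left.1 ≤ a) (has : a ≤ s) :
      e.height a ≤ f.height a :=
    Edge.height_le_height_of_not_crosses (hE e he f hf) has hea hfa hse hs.2.le hef
  have f_le_e' {a : K} (hea : e.left.1 ≤ a) (hfa : f.left.1 ≤ a) (has : a ≤ s) :
      f.height a ≤ e'.height a :=
    Edge.height_le_height_of_not_crosses (hE f hf e' he') has hfa (hleft ▸ hea) hs.2.le hse' hfe'
  rcases lt_or_ge e.left.1 f.left.1 with hlt | hle
  · refine ⟨⟨⟨hlt, hs.1.le.trans hs'.2⟩, ?_, ?_⟩, hs.1⟩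
    · simpa using e_le_f hlt.le le_rfl hs.1.le
    · simpa using f_le_e' hlt.le le_rfl hs.1.le
  · exfalso
    have through_apex : f.height e.left.1 = e.left.2 := by
      refine le_antisymm ?_ ?_
      · simpa [← hleft] using f_le_e' le_rfl hle hs'.1.le
      · simpa using e_le_f le_rfl hle hs'.1.le
    rcases hle.lt_or_eq with hlt | heq
    · exact h.height_ne f hf e.left (h.left_mem he) ⟨hlt, hs'.1.trans hs.2⟩ through_apex
    · have hfleft : f.left = e.left := h.injOn_fst (h.left_mem hf) (h.left_mem he) heq
      have hef_slope : e.slope < f.slope := (Edge.slope_lt_slope_iff hfleft.symm hs'.1).2 hef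
      have hfe'_slope : f.slope < e'.slope :=
        (Edge.slope_lt_slope_iff (hfleft.trans hleft.symm) hs.1).2 hfe'
      exact (MinimalFor.le hee' ⟨hf, hfleft, hef_slope⟩).not_gt hfe'_slope

lemma IsFanSucc.exists_mem_wedge (h : IsDrawing A E) (he : e ∈ E) (hee' : IsFanSucc E e e') :
    ∃ w ∈ A, w ∈ e.wedge e' := by
  have hleft : e'.left = e.left := hee'.1.2.1
  have hlt' : e.left.1 < e'.right.1 := hleft ▸ e'.left_lt_right
  rcases le_total e.right.1 e'.right.1 with hle | hle
  · refine ⟨e.right, h.right_mem he, ⟨e.left_lt_right, le_min le_rfl hle⟩, by simp, ?_⟩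
    simpa using (hee'.height_lt e.left_lt_right).le
  · refine ⟨e'.right, h.right_mem hee'.1.1, ⟨hlt', le_min hle le_rfl⟩, ?_, by simp⟩
    simpa using (hee'.height_lt hlt').le

lemma IsFanSucc.exists_leftmost_mem_wedge (h : IsDrawing A E) (hE : IsNoncrossing E) (he : e ∈ E)
    (hee' : IsFanSucc E e e') :
    ∃ w ∈ A, w ∈ e.wedge e' ∧
      ∀ f ∈ E, w.1 ∈ f.span → f.height w.1 ≤ e.height w.1 ∨ e'.height w.1 ≤ f.height w.1 := by
  classical
  obtain ⟨v, hvA, hv⟩ := hee'.exists_mem_wedge h he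
  obtain ⟨w, hw, hmin⟩ := Finset.exists_min_image {w ∈ A | w ∈ e.wedge e'} Prod.fst
    ⟨v, Finset.mem_filter.2 ⟨hvA, hv⟩⟩
  obtain ⟨hwA, hwedge⟩ := Finset.mem_filter.1 hw
  refine ⟨w, hwA, hwedge, fun f hf hwf => ?_⟩
  by_contra! hbetween
  obtain ⟨hfwedge, hfw⟩ := hee'.left_mem_wedge h hE he hf hwf hwedge.1 hbetween.1 hbetween.2
  exact (hmin f.left (Finset.mem_filter.2 ⟨h.left_mem hf, hfwedge⟩)).not_gt hfw

lemma IsFanSucc.exists_isDirectlyBelow_or_isDirectlyAbove (h : IsDrawing A E)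
    (hE : IsNoncrossing E) (he : e ∈ E) (hee' : IsFanSucc E e e') :
    ∃ w ∈ A, IsDirectlyBelow E e w ∨ IsDirectlyAbove E e' w := by
  have hleft : e'.left = e.left := hee'.1.2.1
  obtain ⟨w, hwA, ⟨⟨hew, hw⟩, hwe, hwe'⟩, hempty⟩ := hee'.exists_leftmost_mem_wedge h hE he
  obtain ⟨hwr, hwr'⟩ := le_min_iff.1 hw
  have hlt : e.height w.1 < e'.height w.1 := hee'.height_lt hew
  refine ⟨w, hwA, ?_⟩
  rcases hwr.lt_or_eq with hwr | hwr
  · have hwe : e.height w.1 < w.2 := hwe.lt_of_ne (h.height_ne e he w hwA ⟨hew, hwr⟩)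
    exact .inl ⟨⟨he, ⟨hew, hwr⟩, hwe⟩, fun f hf _ =>
      (hempty f hf.1 hf.2.1).resolve_right (hf.2.2.trans_le hwe').not_ge⟩
  · obtain rfl : w = e.right := h.injOn_fst hwA (h.right_mem he) hwr
    rw [Edge.height_right] at hlt hempty
    have hright : e.right.1 < e'.right.1 := hwr'.lt_of_ne fun heq => by
      rw [heq, Edge.height_right, h.injOn_fst hwA (h.right_mem hee'.1.1) heq] at hlt
      exact hlt.false
    exact .inr ⟨⟨hee'.1.1, ⟨hleft ▸ hew, hright⟩, hlt⟩, fun f hf _ =>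
      (hempty f hf.1 hf.2.1).resolve_left hf.2.2.not_ge⟩

lemma IsDrawing.maximalFor_slope_or_isDirectlyBelow_or_isDirectlyAbove (h : IsDrawing A E)
    (hE : IsNoncrossing E) (he : e ∈ E) :
    MaximalFor (fun f => f ∈ E ∧ f.left = e.left) Edge.slope e ∨
      (∃ w ∈ A, IsDirectlyBelow E e w) ∨
      ∃ w ∈ A, ∃ e', IsFanSucc E e e' ∧ IsDirectlyAbove E e' w := by
  by_cases hsteepest : ∀ f ∈ E, f.left = e.left → f.slope ≤ e.slope
  · exact .inl ⟨⟨he, rfl⟩, fun f hf _ => hsteepest f hf.1 hf.2⟩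
  · push Not at hsteepest
    obtain ⟨f, hf, hleft, hslope⟩ := hsteepest
    obtain ⟨e', hee'⟩ := exists_isFanSucc hf hleft hslope
    obtain ⟨w, hw, hbelow | habove⟩ := hee'.exists_isDirectlyBelow_or_isDirectlyAbove h hE he
    · exact .inr (.inl ⟨w, hw, hbelow⟩)
    · exact .inr (.inr ⟨w, hw, e', hee', habove⟩)

lemma IsDrawing.card_le_of_isNoncrossing (h : IsDrawing A E) (hE : IsNoncrossing E) :
    #E ≤ 3 * #A := by
  classical
  let steepest : Finset (Edge K) :=
    {e ∈ E | MaximalFor (fun f => f ∈ E ∧ f.left = e.left) Edge.slope e}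
  let below : Finset (Edge K) := {e ∈ E | ∃ w ∈ A, IsDirectlyBelow E e w}
  let above : Finset (Edge K) :=
    {e ∈ E | ∃ w ∈ A, ∃ e', IsFanSucc E e e' ∧ IsDirectlyAbove E e' w}
  have hcover : E ⊆ steepest ∪ (below ∪ above) := fun e he => by
    simpa [steepest, below, above, he] using
      h.maximalFor_slope_or_isDirectlyBelow_or_isDirectlyAbove hE he
  have hsteepest : #steepest ≤ #A := by
    refine Finset.card_le_card_of_injOn Edge.left
      (fun e he => h.left_mem (Finset.mem_filter.1 he).1) fun e he f hf hleft => ?_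
    obtain ⟨he, hemax⟩ := Finset.mem_filter.1 he
    obtain ⟨hf, hfmax⟩ := Finset.mem_filter.1 hf
    exact h.eq_of_left_eq_of_slope_eq he hf hleft
      ((MaximalFor.le hfmax ⟨he, hleft⟩).antisymm (MaximalFor.le hemax ⟨hf, hleft.symm⟩))
  have hbelow : #below ≤ #A :=
    Finset.card_le_card_of_forall_subsingleton (IsDirectlyBelow E)
      (fun e he => (Finset.mem_filter.1 he).2) fun w _ e he f hf => he.2.eq hE hf.2
  have habove : #above ≤ #A := by
    refine Finset.card_le_card_of_forall_subsingleton
      (fun e w => ∃ e', IsFanSucc E e e' ∧ IsDirectlyAbove E e' w)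
      (fun e he => (Finset.mem_filter.1 he).2) ?_
    rintro w - e ⟨he, e', hee', he'w⟩ f ⟨hf, f', hff', hf'w⟩
    obtain rfl := he'w.eq hE hf'w
    exact hee'.eq h (Finset.mem_filter.1 he).1 (Finset.mem_filter.1 hf).1 hff'
  calc #E ≤ #(steepest ∪ (below ∪ above)) := Finset.card_le_card hcover
    _ ≤ #steepest + (#below + #above) :=
      (Finset.card_union_le _ _).trans (Nat.add_le_add_left (Finset.card_union_le _ _) _)
    _ ≤ 3 * #A := by lia

lemma IsDrawing.card_le_add_card_crossings (h : IsDrawing A E) :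
    #E ≤ 3 * #A + #(crossings E) := by
  classical
  have huncrossed : #{e ∈ E | ∀ f ∈ E, ¬ e.Crosses f} ≤ 3 * #A := by
    have hsub := Finset.filter_subset (fun e => ∀ f ∈ E, ¬ e.Crosses f) E
    have hdrawing := h.mono subset_rfl hsub fun e he => h.endpoints_subset e (hsub he)
    exact hdrawing.card_le_of_isNoncrossing
      fun e he f hf => (Finset.mem_filter.1 he).2 f (hsub hf)
  have hcrossed : #{e ∈ E | ¬ ∀ f ∈ E, ¬ e.Crosses f} ≤ #(crossings E) := by
    refine Finset.card_le_card_of_surjOn Prod.fst fun e he => ?_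
    obtain ⟨he, hcross⟩ := Finset.mem_filter.1 he
    push Not at hcross
    obtain ⟨f, hf, hef⟩ := hcross
    exact ⟨(e, f), mem_crossings.2 ⟨⟨he, hf⟩, hef⟩, rfl⟩
  rw [← Finset.card_filter_add_card_filter_not (s := E) fun e => ∀ f ∈ E, ¬ e.Crosses f]
  exact Nat.add_le_add huncrossed hcrossed

lemma IsDrawing.card_filter_endpoints_subset_le (h : IsDrawing A E) {B : Finset (K × K)}
    (hB : B ⊆ A) :
    #{e ∈ E | e.endpoints ⊆ B} ≤
      3 * #B + #{q ∈ crossings E | q.1.endpoints ∪ q.2.endpoints ⊆ B} := by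
  rw [← crossings_filter_endpoints_subset]
  exact (h.mono hB (Finset.filter_subset _ E)
    fun e he => (Finset.mem_filter.1 he).2).card_le_add_card_crossings

-- Apply the deletion bound to the subdrawing induced by a random subset of the vertices, and take
-- expectations: a vertex survives with probability `p`, an edge with `p ^ 2`, a crossing with
-- `p ^ 4`.
lemma IsDrawing.sq_mul_card_le (h : IsDrawing A E) {p : ℝ} (hp : p ∈ Icc 0 1) :
    p ^ 2 * #E ≤ 3 * (p * #A) + p ^ 4 * #(crossings E) := by
  have hweight (B : Finset (K × K)) : 0 ≤ sampleWeight p A B :=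
    mul_nonneg (pow_nonneg hp.1 _) (pow_nonneg (sub_nonneg.2 hp.2) _)
  have hvertices {B : Finset (K × K)} (hB : B ⊆ A) : #{v ∈ A | {v} ⊆ B} = #B := by
    simp only [Finset.singleton_subset_iff, Finset.filter_mem_eq_inter,
      Finset.inter_eq_right.2 hB]
  have hcrossings : ∀ q ∈ crossings E, q.1.endpoints ∪ q.2.endpoints ⊆ A := fun q hq =>
    have hqE := (mem_crossings.1 hq).1
    Finset.union_subset (h.endpoints_subset _ hqE.1) (h.endpoints_subset _ hqE.2)
  calc p ^ 2 * #E
      = ∑ B ∈ A.powerset, sampleWeight p A B * #{e ∈ E | e.endpoints ⊆ B} :=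
        (sum_sampleWeight_mul_card p E h.endpoints_subset fun e _ => e.card_endpoints).symm
    _ ≤ ∑ B ∈ A.powerset, sampleWeight p A B * (3 * #{v ∈ A | {v} ⊆ B} +
          #{q ∈ crossings E | q.1.endpoints ∪ q.2.endpoints ⊆ B}) := by
        refine Finset.sum_le_sum fun B hB => mul_le_mul_of_nonneg_left ?_ (hweight B)
        rw [hvertices (Finset.mem_powerset.1 hB)]
        exact_mod_cast h.card_filter_endpoints_subset_le (Finset.mem_powerset.1 hB)
    _ = 3 * ∑ B ∈ A.powerset, sampleWeight p A B * #{v ∈ A | {v} ⊆ B} +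
          ∑ B ∈ A.powerset, sampleWeight p A B *
            #{q ∈ crossings E | q.1.endpoints ∪ q.2.endpoints ⊆ B} := by
        rw [Finset.mul_sum, ← Finset.sum_add_distrib]
        exact Finset.sum_congr rfl fun B _ => by ring
    _ = 3 * (p * #A) + p ^ 4 * #(crossings E) := by
        rw [sum_sampleWeight_mul_card p A (T := fun v => {v}) (fun v hv => by simpa using hv)
            (fun v _ => Finset.card_singleton v), pow_one,
          sum_sampleWeight_mul_card p _ hcrossings fun q hq =>
            h.card_endpoints_union_endpoints hq]

-- The sampling probability `p = 6 * #A / #E` makes the vertex term half of the edge term.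
theorem IsDrawing.crossing_lemma (h : IsDrawing A E) (hE : 6 * #A ≤ #E) :
    #E ^ 3 ≤ 72 * #A ^ 2 * #(crossings E) := by
  rcases E.eq_empty_or_nonempty with rfl | ⟨e, he⟩
  · simp
  have hA_pos : (0 : ℝ) < #A := mod_cast Finset.card_pos.2 ⟨e.left, h.left_mem he⟩
  have hE_pos : (0 : ℝ) < #E := mod_cast Finset.card_pos.2 ⟨e, he⟩
  have hE_real : (6 * #A : ℝ) ≤ #E := mod_cast hE
  obtain ⟨p, hp⟩ : ∃ p : ℝ, p = 6 * #A / #E := ⟨_, rfl⟩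
  have hp_pos : 0 < p := by rw [hp]; positivity
  have hp_le : p ≤ 1 := by rwa [hp, div_le_one hE_pos]
  have hpE : p * #E = 6 * #A := by rw [hp, div_mul_cancel₀ _ hE_pos.ne']
  have hcard : (#E : ℝ) ≤ 2 * p ^ 2 * #(crossings E) := by
    refine le_of_mul_le_mul_left ?_ (pow_pos hp_pos 2)
    linear_combination 2 * h.sq_mul_card_le ⟨hp_pos.le, hp_le⟩ - p * hpE
  have hcube : (#E : ℝ) ^ 3 ≤ 72 * #A ^ 2 * #(crossings E) :=
    calc (#E : ℝ) ^ 3 = #E ^ 2 * #E := by ring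
      _ ≤ #E ^ 2 * (2 * p ^ 2 * #(crossings E)) := by gcongr
      _ = 2 * (p * #E) ^ 2 * #(crossings E) := by ring
      _ = 72 * #A ^ 2 * #(crossings E) := by rw [hpE]; ring
  exact_mod_cast hcube

end OrderedField

/-- The points of `A` on the nonvertical line `y = l.1 * x + l.2`. -/
def pointsOn (A : Finset (K × K)) (l : K × K) : Finset (K × K) := {p ∈ A | p.2 = l.1 * p.1 + l.2}

lemma mem_pointsOn {p l : K × K} : p ∈ pointsOn A l ↔ p ∈ A ∧ p.2 = l.1 * p.1 + l.2 :=
  Finset.mem_filter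

lemma pointsOn_subset (A : Finset (K × K)) (l : K × K) : pointsOn A l ⊆ A :=
  Finset.filter_subset _ A

lemma ncard_inter_eq_card_pointsOn_image {α : Type*} {f : α → K × K} (hf : Function.Injective f)
    (S : Finset α) {L : Set α} {l : K × K} (hL : ∀ z, z ∈ L ↔ (f z).2 = l.1 * (f z).1 + l.2) :
    ((S : Set α) ∩ L).ncard = #(pointsOn (S.image f) l) := by
  have himage : (pointsOn (S.image f) l : Set (K × K)) = f '' (S ∩ L) := by
    ext p
    simp only [Finset.mem_coe, mem_pointsOn, Finset.mem_image, mem_image, mem_inter_iff, hL]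
    aesop
  rw [← ncard_coe_finset, himage, ncard_image_of_injective _ hf]

lemma IsConsecutive.height_eq {l : K × K} (he : IsConsecutive (pointsOn A l) e) (s : K) :
    e.height s = l.1 * s + l.2 := by
  have hleft := (mem_pointsOn.1 he.1.1).2
  have hright := (mem_pointsOn.1 he.1.2).2
  have hslope : e.slope = l.1 := by
    rw [Edge.slope, div_eq_iff (sub_ne_zero.2 e.left_lt_right.ne'), hleft, hright]
    ring
  rw [Edge.height, hslope, hleft]
  ring

lemma IsConsecutive.line_eq {l l' : K × K} (he : IsConsecutive (pointsOn A l) e)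
    (he' : IsConsecutive (pointsOn A l') e) : l = l' :=
  eq_of_affine_eq_of_affine_eq e.left_lt_right.ne ((he.height_eq _).symm.trans (he'.height_eq _))
    ((he.height_eq _).symm.trans (he'.height_eq _))

lemma isDrawing_of_isConsecutive_pointsOn (hA : InjOn Prod.fst (A : Set (K × K)))
    (hE : ∀ e ∈ E, ∃ l, IsConsecutive (pointsOn A l) e) : IsDrawing A E where
  injOn_fst := hA
  endpoints_subset e he := by
    obtain ⟨l, hl⟩ := hE e he
    exact Edge.endpoints_subset_iff.2 ⟨pointsOn_subset A l hl.1.1, pointsOn_subset A l hl.1.2⟩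
  height_ne e he w hw hspan hheight := by
    obtain ⟨l, hl⟩ := hE e he
    exact hl.2 w (mem_pointsOn.2 ⟨hw, hheight.symm.trans (hl.height_eq w.1)⟩) hspan

-- A crossing of two edges determines the two lines carrying them, and it is determined by these
-- lines since they meet in one point.
lemma card_crossings_le_sq (hA : InjOn Prod.fst (A : Set (K × K))) {Λ : Finset (K × K)}
    (hE : ∀ e ∈ E, ∃ l ∈ Λ, IsConsecutive (pointsOn A l) e) : #(crossings E) ≤ #Λ ^ 2 := by
  have hinj (l : K × K) := hA.mono (pointsOn_subset A l)
  rw [sq, ← Finset.card_product]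
  refine Finset.card_le_card_of_forall_subsingleton
    (fun q l => IsConsecutive (pointsOn A l.1) q.1 ∧ IsConsecutive (pointsOn A l.2) q.2) ?_ ?_
  · rintro ⟨e, f⟩ hq
    obtain ⟨⟨he, hf⟩, -⟩ := mem_crossings.1 hq
    obtain ⟨l, hl, hel⟩ := hE e he
    obtain ⟨l', hl', hfl'⟩ := hE f hf
    exact ⟨(l, l'), Finset.mk_mem_product hl hl', hel, hfl'⟩
  · rintro ⟨l, l'⟩ - ⟨e, f⟩ ⟨hq, he, hf⟩ ⟨e₁, f₁⟩ ⟨hq₁, he₁, hf₁⟩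
    obtain ⟨-, hne, s, ⟨hes, hfs⟩, hs⟩ := mem_crossings.1 hq
    obtain ⟨-, -, t, ⟨het, hft⟩, ht⟩ := mem_crossings.1 hq₁
    have hll' : l ≠ l' := by
      rintro rfl
      exact hne (he.eq (hinj l) hf hes hfs)
    rw [he.height_eq, hf.height_eq] at hs
    rw [he₁.height_eq, hf₁.height_eq] at ht
    obtain rfl : s = t := by
      by_contra hst
      exact hll' (eq_of_affine_eq_of_affine_eq hst hs ht)
    exact Prod.ext (he.eq (hinj l) he₁ hes het) (hf.eq (hinj l') hf₁ hfs hft)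

lemma exists_finset_isConsecutive_pointsOn (hA : InjOn Prod.fst (A : Set (K × K)))
    {Λ : Finset (K × K)} {k : ℕ} (hΛ : ∀ l ∈ Λ, k < #(pointsOn A l)) :
    ∃ E : Finset (Edge K), #Λ * k ≤ #E ∧ ∀ e ∈ E, ∃ l ∈ Λ, IsConsecutive (pointsOn A l) e := by
  classical
  choose edges hcard hedges using fun l =>
    exists_finset_isConsecutive (hA.mono (pointsOn_subset A l))
  have hdisj : (Λ : Set (K × K)).PairwiseDisjoint edges := fun l _ l' _ hll' =>
    Finset.disjoint_left.2 fun e he he' => hll' ((hedges l e he).line_eq (hedges l' e he'))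
  refine ⟨Λ.biUnion edges, ?_, fun e he => ?_⟩
  · rw [Finset.card_biUnion hdisj, ← smul_eq_mul]
    exact Finset.card_nsmul_le_sum _ _ _ fun l hl =>
      Nat.le_of_lt_succ ((hΛ l hl).trans_le (hcard l))
  · obtain ⟨l, hl, hel⟩ := Finset.mem_biUnion.1 he
    exact ⟨l, hl, hedges l e hel⟩

variable [IsStrictOrderedRing K]

lemma card_mul_le_or_card_mul_pow_le (hA : InjOn Prod.fst (A : Set (K × K))) {Λ : Finset (K × K)}
    {k : ℕ} (hk : 2 ≤ k) (hΛ : ∀ l ∈ Λ, k ≤ #(pointsOn A l)) :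
    #Λ * k ≤ 12 * #A ∨ #Λ * k ^ 3 ≤ 576 * #A ^ 2 := by
  rcases Λ.eq_empty_or_nonempty with rfl | hne
  · simp
  obtain ⟨E, hcard, hE⟩ := exists_finset_isConsecutive_pointsOn hA (k := k - 1)
    fun l hl => (Nat.sub_one_lt_of_lt hk).trans_le (hΛ l hl)
  have hdrawing : IsDrawing A E := isDrawing_of_isConsecutive_pointsOn hA fun e he =>
    (hE e he).imp fun _ hl => hl.2
  have hΛk : #Λ * k ≤ 2 * #E :=
    calc #Λ * k ≤ #Λ * (2 * (k - 1)) := Nat.mul_le_mul_left _ (by lia)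
      _ = 2 * (#Λ * (k - 1)) := by ring
      _ ≤ 2 * #E := Nat.mul_le_mul_left _ hcard
  rcases le_total (#E) (6 * #A) with hfew | hmany
  · exact .inl (hΛk.trans (by lia))
  · refine .inr (Nat.le_of_mul_le_mul_left ?_ (pow_pos (Finset.card_pos.2 hne) 2))
    calc #Λ ^ 2 * (#Λ * k ^ 3) = (#Λ * k) ^ 3 := by ring
      _ ≤ (2 * #E) ^ 3 := Nat.pow_le_pow_left hΛk 3
      _ = 8 * #E ^ 3 := by ring
      _ ≤ 8 * (72 * #A ^ 2 * #(crossings E)) :=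
        Nat.mul_le_mul_left 8 (hdrawing.crossing_lemma hmany)
      _ ≤ 8 * (72 * #A ^ 2 * #Λ ^ 2) := by
        gcongr
        exact card_crossings_le_sq hA hE
      _ = #Λ ^ 2 * (576 * #A ^ 2) := by ring

theorem card_le_of_le_card_pointsOn (hA : InjOn Prod.fst (A : Set (K × K))) {Λ : Finset (K × K)}
    {k : ℕ} (hk : 2 ≤ k) (hΛ : ∀ l ∈ Λ, k ≤ #(pointsOn A l)) :
    (#Λ : ℝ) ≤ 576 * ((#A : ℝ) ^ 2 / (k : ℝ) ^ 3 + (#A : ℝ) / (k : ℝ)) := by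
  have hk_pos : (0 : ℝ) < k := by positivity
  have hlinear : (0 : ℝ) ≤ #A / k := by positivity
  have hquadratic : (0 : ℝ) ≤ #A ^ 2 / k ^ 3 := by positivity
  rcases card_mul_le_or_card_mul_pow_le hA hk hΛ with hle | hle
  · have : (#Λ : ℝ) ≤ 12 * (#A / k) := by
      rw [mul_div_assoc', le_div_iff₀ hk_pos]
      exact_mod_cast hle
    linarith
  · have : (#Λ : ℝ) ≤ 576 * (#A ^ 2 / k ^ 3) := by
      rw [mul_div_assoc', le_div_iff₀ (pow_pos hk_pos 3)]
      exact_mod_cast hle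
    linarith

end SzemerediTrotter

open SzemerediTrotter in
theorem szemeredi_trotter_rich_lines_general {K : Type*} [Field K] [LinearOrder K]
    [IsStrictOrderedRing K] (S : Finset (K × K)) (𝓛 : Finset (Set (K × K)))
    (h𝓛 : ∀ L ∈ 𝓛, ∃ p q : K × K, p ≠ q ∧ L = (line[K, p, q] : Set (K × K))) {k : ℕ}
    (hk : 2 ≤ k) :
    (#{L ∈ 𝓛 | k ≤ ((S : Set (K × K)) ∩ L).ncard} : ℝ) ≤
      576 * ((#S : ℝ) ^ 2 / (k : ℝ) ^ 3 + (#S : ℝ) / (k : ℝ)) := by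
  obtain ⟨t, ht⟩ := exists_injOn_fst_shear S
  set rich : Finset (Set (K × K)) := {L ∈ 𝓛 | k ≤ ((S : Set (K × K)) ∩ L).ncard}
  have hrich (L : Set (K × K)) (hL : L ∈ rich) : k ≤ ((S : Set (K × K)) ∩ L).ncard :=
    (Finset.mem_filter.1 hL).2
  have hgraph (L : Set (K × K)) (hL : L ∈ rich) :
      ∃ l : K × K, ∀ z, z ∈ L ↔ (shear t z).2 = l.1 * (shear t z).1 + l.2 := by
    obtain ⟨p, q, hp, hq, hpq⟩ := (one_lt_ncard_iff (S.finite_toSet.inter_of_left L)).1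
      (hk.trans (hrich L hL))
    obtain ⟨a, b, -, rfl⟩ := h𝓛 L (Finset.mem_filter.1 hL).1
    exact exists_mem_line_iff_shear t hp.2 hq.2 fun h => hpq (ht hp.1 hq.1 h)
  choose! graph hgraph using hgraph
  have hinj : InjOn graph (rich : Set (Set (K × K))) := fun L hL L' hL' h => by
    ext z
    rw [hgraph L hL, hgraph L' hL', h]
  rw [← Finset.card_image_of_injOn hinj, ← Finset.card_image_of_injective S (shear_injective t)]
  refine card_le_of_le_card_pointsOn (by rw [Finset.coe_image]; exact ht.image_of_comp) hk ?_
  refine Finset.forall_mem_image.2 fun L hL => (hrich L hL).trans_eq ?_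
  exact ncard_inter_eq_card_pointsOn_image (shear_injective t) S (hgraph L hL)

/-- Szemerédi–Trotter theorem, rich-lines form: the number of `k`-rich lines in a
finite family `𝓛`, with respect to an `n`-point set, is at most `C(n²/k³ + n/k)`. -/
theorem szemeredi_trotter_rich_lines :
    ∃ C : ℝ, 0 < C ∧ ∀ (S : Finset (ℝ × ℝ)) (𝓛 : Finset (Set (ℝ × ℝ))) (n k : ℕ),
      S.card = n → (∀ L ∈ 𝓛, IsLine L) → 2 ≤ k →
      (((𝓛.filter fun L => k ≤ richness S L).card : ℝ)) ≤
        C * ((n : ℝ) ^ 2 / (k : ℝ) ^ 3 + (n : ℝ) / (k : ℝ)) := by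
  refine ⟨576, by norm_num, ?_⟩
  rintro S 𝓛 _ k rfl h𝓛 hk
  exact szemeredi_trotter_rich_lines_general S 𝓛 h𝓛 hk
end
end

section
/- There is an absolute constant K₁ > 0 with the following property. Let P and Q be disjoint finite sets of points in the Euclidean plane ℝ² with |P| = |Q| = n. Then the number of pairs (p, q) with p ∈ P and q ∈ Q such that the line through p and q has richness at least 1/K₁ and at most K₁ · n with respect to P ∪ Q is at most n²/2. Equivalently, at least n²/2 of the n² bichromatic pairs (p, q) induce a line whose richness is either less than 1/K₁ or greater than K₁ · n. -/
open Set

noncomputable section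

/-!
The heart of the argument is that only `O(N / k + N² / k³)` lines contain `k ≥ 2` or more of `N`
given points (Szemerédi–Trotter). Joining consecutive points on each of these lines gives a graph
drawn with straight edges and at most one crossing per pair of lines, so the crossing lemma bounds
its number of edges. The crossing lemma itself is obtained by random sampling of vertices from the
linear bound on the number of edges of a plane graph. That bound is proved without Euler's formula:
an edge that is not the uppermost one at its left endpoint is charged to the first vertex in the
wedge between it and the next edge, and no vertex is charged more than twice.

A line of richness `r` carries at most `r²` pairs. Summing over the lines with `1 / K ≤ r ≤ K n`,
the first term contributes `O(n · K n)` and the second `O(n² · K)`, so a small `K` suffices.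
-/

open scoped Finset

/-- A non-vertical line segment in the plane, oriented from left to right; the edges of the
drawings below. -/
@[ext]
structure Edge where
  left : ℝ × ℝ
  right : ℝ × ℝ
  left_lt_right : left.1 < right.1

namespace Edge

/-- The relative interior of an edge. -/
def interior (e : Edge) : Set (ℝ × ℝ) := openSegment ℝ e.left e.right

/-- The line supporting an edge. -/
def line (e : Edge) : Set (ℝ × ℝ) := lineThrough e.left e.right

/-- The slope of the supporting line of an edge. -/
def slope (e : Edge) : ℝ := (e.right.2 - e.left.2) / (e.right.1 - e.left.1)

/-- The affine function whose graph is the supporting line of an edge. -/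
def height (e : Edge) (x : ℝ) : ℝ := e.left.2 + e.slope * (x - e.left.1)

/-- Two distinct edges cross if their relative interiors meet. -/
def Crosses (e f : Edge) : Prop := e ≠ f ∧ (e.interior ∩ f.interior).Nonempty

/-- The two endpoints of an edge. -/
def endpoints (e : Edge) : Finset (ℝ × ℝ) := {e.left, e.right}

variable {e f : Edge} {z : ℝ × ℝ}

lemma continuous_height (e : Edge) : Continuous e.height := by
  unfold height
  fun_prop

lemma height_left (e : Edge) : e.height e.left.1 = e.left.2 := by simp [height]

lemma height_right (e : Edge) : e.height e.right.1 = e.right.2 := by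
  have : e.right.1 - e.left.1 ≠ 0 := (sub_pos.2 e.left_lt_right).ne'
  simp [height, slope, this]

lemma height_lt_height (hleft : e.left = f.left) (hslope : e.slope < f.slope) {x : ℝ}
    (hx : e.left.1 < x) : e.height x < f.height x := by
  unfold height
  rw [← hleft]
  gcongr

lemma slope_lt_slope (hleft : e.left = f.left) {x : ℝ} (hx : e.left.1 < x)
    (h : e.height x < f.height x) : e.slope < f.slope := by
  unfold height at h
  rw [← hleft] at h
  exact lt_of_mul_lt_mul_right (lt_of_add_lt_add_left h) (sub_pos.2 hx).le

lemma height_eq_height_of_two_points {x y : ℝ} (hxy : x ≠ y) (hx : e.height x = f.height x)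
    (hy : e.height y = f.height y) : e.height = f.height := by
  unfold height at hx hy
  have hslope : e.slope = f.slope :=
    mul_right_cancel₀ (sub_ne_zero.2 hxy) (by linear_combination hx - hy)
  ext w
  unfold height
  linear_combination hx + hslope * (w - x)

lemma lineMap_eq_iff (r : ℝ) : AffineMap.lineMap e.left e.right r = z ↔
    (z.1 - e.left.1) / (e.right.1 - e.left.1) = r ∧ z.2 = e.height z.1 := by
  have hpos : e.right.1 - e.left.1 ≠ 0 := (sub_pos.2 e.left_lt_right).ne'
  rw [div_eq_iff hpos, AffineMap.lineMap_apply, Prod.ext_iff]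
  simp only [vsub_eq_sub, vadd_eq_add, Prod.fst_add, Prod.snd_add, Prod.smul_fst, Prod.smul_snd,
    Prod.fst_sub, Prod.snd_sub, smul_eq_mul, height, slope]
  have hfst : r * (e.right.1 - e.left.1) + e.left.1 = z.1 ↔
      z.1 - e.left.1 = r * (e.right.1 - e.left.1) := by
    constructor <;> intro h <;> linarith
  rw [hfst]
  refine and_congr_right fun h => ?_
  rw [h, mul_comm r (e.right.1 - e.left.1), div_mul_eq_mul_div, mul_left_comm,
    mul_div_cancel_left₀ _ hpos]
  constructor <;> intro h <;> linarith

lemma mem_line : z ∈ e.line ↔ z.2 = e.height z.1 := by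
  simp [line, lineThrough, mem_affineSpan_pair_iff_exists_lineMap_eq, lineMap_eq_iff]

lemma mem_interior :
    z ∈ e.interior ↔ e.left.1 < z.1 ∧ z.1 < e.right.1 ∧ z.2 = e.height z.1 := by
  have hpos : 0 < e.right.1 - e.left.1 := sub_pos.2 e.left_lt_right
  simp only [interior, openSegment_eq_image_lineMap, mem_image, lineMap_eq_iff, mem_Ioo]
  constructor
  · rintro ⟨_, ⟨h0, h1⟩, rfl, hz⟩
    rw [div_pos_iff_of_pos_right hpos] at h0
    rw [div_lt_one hpos] at h1
    exact ⟨by linarith, by linarith, hz⟩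
  · rintro ⟨h0, h1, hz⟩
    exact ⟨_, ⟨div_pos (by linarith) hpos, (div_lt_one hpos).2 (by linarith)⟩, rfl, hz⟩

lemma interior_subset_line (e : Edge) : e.interior ⊆ e.line := fun _ hz =>
  mem_line.2 (mem_interior.1 hz).2.2

lemma height_eq_height_of_line_eq (h : e.line = f.line) : e.height = f.height := by
  ext x
  have hx : (x, e.height x) ∈ e.line := mem_line.2 rfl
  exact mem_line.1 (h ▸ hx)

lemma line_eq_line_of_mem {p q : ℝ × ℝ} (hpq : p ≠ q) (hp : p ∈ e.line) (hq : q ∈ e.line)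
    (hp' : p ∈ f.line) (hq' : q ∈ f.line) : e.line = f.line := by
  have he := affineSpan_pair_eq_of_mem_of_mem_of_ne hp hq hpq
  have hf := affineSpan_pair_eq_of_mem_of_mem_of_ne hp' hq' hpq
  unfold line lineThrough
  rw [← he, hf]

lemma left_ne_right_of_mem_interior (he : z ∈ e.interior) (hf : z ∈ f.interior) :
    e.left ≠ f.right := fun h => by
  have hlt := (mem_interior.1 he).1.trans (mem_interior.1 hf).2.1
  exact hlt.ne (by rw [h])

lemma card_endpoints (e : Edge) : #e.endpoints = 2 :=
  Finset.card_pair fun h => e.left_lt_right.ne (by rw [h])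

lemma endpoints_subset_iff {S : Finset (ℝ × ℝ)} :
    e.endpoints ⊆ S ↔ e.left ∈ S ∧ e.right ∈ S := by
  simp [endpoints, Finset.insert_subset_iff]

lemma height_lt_of_not_crosses (hne : e ≠ f) (h : ¬ e.Crosses f) {x : ℝ} (hex : e.left.1 < x)
    (hfx : f.left.1 < x) (hxe : x < e.right.1) (hxf : x < f.right.1)
    (hle : e.height x ≤ f.height x) : e.height x < f.height x :=
  hle.lt_of_ne fun heq => h ⟨hne, (x, e.height x), mem_interior.2 ⟨hex, hxe, rfl⟩,
    mem_interior.2 ⟨hfx, hxf, heq⟩⟩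

/- The order of the heights can only change where they agree, that is, at a crossing. -/
lemma height_le_of_not_crosses (hne : e ≠ f) (h : ¬ e.Crosses f) {s x : ℝ}
    (hes : e.left.1 ≤ s) (hfs : f.left.1 ≤ s) (hsx : s < x) (hxe : x < e.right.1)
    (hxf : x < f.right.1) (hle : e.height x ≤ f.height x) : e.height s ≤ f.height s := by
  have hlt := height_lt_of_not_crosses hne h (hes.trans_lt hsx) (hfs.trans_lt hsx) hxe hxf hle
  by_contra! hs
  have hcont : ContinuousOn (fun y => e.height y - f.height y) (Icc s x) :=
    (e.continuous_height.sub f.continuous_height).continuousOn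
  obtain ⟨y, ⟨hsy, hyx⟩, hy⟩ :=
    intermediate_value_Ioo' hsx.le hcont ⟨sub_neg.2 hlt, sub_pos.2 hs⟩
  exact (height_lt_of_not_crosses hne h (hes.trans_lt hsy) (hfs.trans_lt hsy) (hyx.trans hxe)
    (hyx.trans hxf) (sub_eq_zero.1 hy).le).ne (sub_eq_zero.1 hy)

end Edge

/-- A geometric graph: a graph drawn with straight edges on a vertex set `V`, no edge passing
through a further vertex. Distinct vertices are required to have distinct abscissae, so that every
edge is non-vertical and is listed once, from left to right. -/
structure IsGeometricGraph (V : Finset (ℝ × ℝ)) (E : Finset Edge) : Prop where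
  injOn_fst : InjOn Prod.fst (V : Set (ℝ × ℝ))
  left_mem : ∀ e ∈ E, e.left ∈ V
  right_mem : ∀ e ∈ E, e.right ∈ V
  notMem_interior : ∀ e ∈ E, ∀ w ∈ V, w ∉ e.interior

open scoped Classical in
/-- The ordered pairs of crossing edges; each crossing is thus counted twice. -/
def crossings (E : Finset Edge) : Finset (Edge × Edge) :=
  {ef ∈ E ×ˢ E | ef.1.Crosses ef.2}

lemma mem_crossings {E : Finset Edge} {ef : Edge × Edge} :
    ef ∈ crossings E ↔ (ef.1 ∈ E ∧ ef.2 ∈ E) ∧ ef.1.Crosses ef.2 := by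
  simp [crossings]

namespace IsGeometricGraph

variable {V : Finset (ℝ × ℝ)} {E : Finset Edge} {e f : Edge}

lemma anti_edges (hG : IsGeometricGraph V E) {E' : Finset Edge} (hE : E' ⊆ E) :
    IsGeometricGraph V E' where
  injOn_fst := hG.injOn_fst
  left_mem e he := hG.left_mem e (hE he)
  right_mem e he := hG.right_mem e (hE he)
  notMem_interior e he := hG.notMem_interior e (hE he)

lemma induce (hG : IsGeometricGraph V E) {S : Finset (ℝ × ℝ)} (hS : S ⊆ V) :
    IsGeometricGraph S {e ∈ E | e.endpoints ⊆ S} where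
  injOn_fst := hG.injOn_fst.mono hS
  left_mem _ he := (Edge.endpoints_subset_iff.1 (Finset.mem_filter.1 he).2).1
  right_mem _ he := (Edge.endpoints_subset_iff.1 (Finset.mem_filter.1 he).2).2
  notMem_interior e he w hw := hG.notMem_interior e (Finset.mem_filter.1 he).1 w (hS hw)

lemma endpoints_subset (hG : IsGeometricGraph V E) (he : e ∈ E) : e.endpoints ⊆ V :=
  Edge.endpoints_subset_iff.2 ⟨hG.left_mem e he, hG.right_mem e he⟩

lemma eq_of_height_eq (hG : IsGeometricGraph V E) (he : e ∈ E) (hf : f ∈ E)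
    (h : e.height = f.height) (hef : e.left.1 < f.right.1) (hfe : f.left.1 < e.right.1) :
    e = f := by
  have not_between {g : Edge} (hg : g ∈ E) {w : ℝ × ℝ} (hw : w ∈ V) (hwg : w.2 = g.height w.1)
      (hl : g.left.1 < w.1) (hr : w.1 < g.right.1) : False :=
    hG.notMem_interior g hg w hw (Edge.mem_interior.2 ⟨hl, hr, hwg⟩)
  have heL : e.left.2 = f.height e.left.1 := by rw [← h, e.height_left]
  have hfL : f.left.2 = e.height f.left.1 := by rw [h, f.height_left]
  have heR : e.right.2 = f.height e.right.1 := by rw [← h, e.height_right]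
  have hfR : f.right.2 = e.height f.right.1 := by rw [h, f.height_right]
  refine Edge.ext (hG.injOn_fst (hG.left_mem e he) (hG.left_mem f hf) (le_antisymm ?_ ?_))
    (hG.injOn_fst (hG.right_mem e he) (hG.right_mem f hf) (le_antisymm ?_ ?_)) <;>
    refine not_lt.1 fun hlt => ?_
  · exact not_between hf (hG.left_mem e he) heL hlt hef
  · exact not_between he (hG.left_mem f hf) hfL hlt hfe
  · exact not_between he (hG.right_mem f hf) hfR hef hlt
  · exact not_between hf (hG.right_mem e he) heR hfe hlt

lemma eq_of_height_eq_of_mem_interior (hG : IsGeometricGraph V E) (he : e ∈ E) (hf : f ∈ E)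
    (h : e.height = f.height) {z : ℝ × ℝ} (hze : z ∈ e.interior) (hzf : z ∈ f.interior) :
    e = f := by
  rw [Edge.mem_interior] at hze hzf
  exact hG.eq_of_height_eq he hf h (hze.1.trans hzf.2.1) (hzf.1.trans hze.2.1)

lemma disjoint_endpoints_of_crosses (hG : IsGeometricGraph V E) (he : e ∈ E) (hf : f ∈ E)
    (h : e.Crosses f) : Disjoint e.endpoints f.endpoints := by
  obtain ⟨hne, z, hze, hzf⟩ := h
  have heq : e.height z.1 = f.height z.1 :=
    (Edge.mem_interior.1 hze).2.2.symm.trans (Edge.mem_interior.1 hzf).2.2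
  have not_agree {x : ℝ} (hx : x ≠ z.1) (hxef : e.height x = f.height x) : False :=
    hne (hG.eq_of_height_eq_of_mem_interior he hf
      (Edge.height_eq_height_of_two_points hx hxef heq) hze hzf)
  have hleft : e.left ≠ f.left := fun h => not_agree (Edge.mem_interior.1 hze).1.ne
    (by rw [e.height_left, h, f.height_left])
  have hright : e.right ≠ f.right := fun h => not_agree (Edge.mem_interior.1 hze).2.1.ne'
    (by rw [e.height_right, h, f.height_right])
  have hlr : e.left ≠ f.right := Edge.left_ne_right_of_mem_interior hze hzf
  have hrl : e.right ≠ f.left := (Edge.left_ne_right_of_mem_interior hzf hze).symm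
  simp [Edge.endpoints, hleft.symm, hright.symm, hlr.symm, hrl.symm]

end IsGeometricGraph

/-- `e'` is the edge following `e` in counterclockwise order around their common left endpoint. -/
structure IsNextEdge (E : Finset Edge) (e e' : Edge) : Prop where
  mem : e' ∈ E
  left_eq : e.left = e'.left
  slope_lt : e.slope < e'.slope
  slope_le : ∀ f ∈ E, e.left = f.left → e.slope < f.slope → e'.slope ≤ f.slope

/-- The part of the closed angular region between `e` and `e'`, without its tip, that lies over
both edges; meant for edges with a common left endpoint, `e` being the lower one. -/
def wedge (e e' : Edge) : Set (ℝ × ℝ) :=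
  {w | e.left.1 < w.1 ∧ w.1 ≤ e.right.1 ∧ w.1 ≤ e'.right.1 ∧
    e.height w.1 ≤ w.2 ∧ w.2 ≤ e'.height w.1}

/-- `w` is a leftmost vertex of the wedge between `e` and `e'`. -/
structure IsFirstVertex (V : Finset (ℝ × ℝ)) (e e' : Edge) (w : ℝ × ℝ) : Prop where
  mem : w ∈ V
  mem_wedge : w ∈ wedge e e'
  fst_le : ∀ z ∈ V, z ∈ wedge e e' → w.1 ≤ z.1

/-- No edge at the left endpoint of `e` is steeper than `e`. -/
def IsTopEdge (E : Finset Edge) (e : Edge) : Prop :=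
  ∀ f ∈ E, e.left = f.left → f.slope ≤ e.slope

/-- `w` is the first vertex of the wedge above `e`, and it lies strictly below the upper side. -/
def IsLowerApex (V : Finset (ℝ × ℝ)) (E : Finset Edge) (e : Edge) (w : ℝ × ℝ) : Prop :=
  ∃ e', IsNextEdge E e e' ∧ IsFirstVertex V e e' w ∧ w.2 < e'.height w.1

/-- `w` is the first vertex of the wedge above `e`, and it lies on the upper side. -/
def IsUpperApex (V : Finset (ℝ × ℝ)) (E : Finset Edge) (e : Edge) (w : ℝ × ℝ) : Prop :=
  ∃ e', IsNextEdge E e e' ∧ IsFirstVertex V e e' w ∧ w.2 = e'.height w.1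

lemma exists_isNextEdge {E : Finset Edge} {e : Edge} (h : ¬ IsTopEdge E e) :
    ∃ e', IsNextEdge E e e' := by
  classical
  simp only [IsTopEdge, not_forall, not_le] at h
  obtain ⟨f, hf, hleft, hslope⟩ := h
  obtain ⟨e', he', hmin⟩ := Finset.exists_min_image {f ∈ E | e.left = f.left ∧ e.slope < f.slope}
    Edge.slope ⟨f, Finset.mem_filter.2 ⟨hf, hleft, hslope⟩⟩
  obtain ⟨hmem, hleft', hslope'⟩ := Finset.mem_filter.1 he'
  exact ⟨e', hmem, hleft', hslope', fun g hg hgl hgs =>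
    hmin g (Finset.mem_filter.2 ⟨hg, hgl, hgs⟩)⟩

lemma IsNextEdge.height_lt {E : Finset Edge} {e e' : Edge} (h : IsNextEdge E e e') {x : ℝ}
    (hx : e.left.1 < x) : e.height x < e'.height x :=
  Edge.height_lt_height h.left_eq h.slope_lt hx

lemma IsNextEdge.height_le {E : Finset Edge} {e e' f : Edge} (h : IsNextEdge E e e')
    (hf : f ∈ E) (hleft : e.left = f.left) {x : ℝ} (hx : e.left.1 < x)
    (hlt : e.height x < f.height x) : e'.height x ≤ f.height x := by
  have hleft' : f.left = e'.left := hleft.symm.trans h.left_eq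
  refine le_of_not_gt fun hgt => (Edge.slope_lt_slope hleft' (hleft ▸ hx) hgt).not_ge ?_
  exact h.slope_le f hf hleft (Edge.slope_lt_slope hleft hx hlt)

namespace IsGeometricGraph

variable {V : Finset (ℝ × ℝ)} {E : Finset Edge} {e e' f f' : Edge} {w : ℝ × ℝ}

lemma exists_mem_wedge (hG : IsGeometricGraph V E) (he : e ∈ E) (hn : IsNextEdge E e e') :
    ∃ w ∈ V, w ∈ wedge e e' := by
  have hlt : e.left.1 < e'.right.1 := hn.left_eq ▸ e'.left_lt_right
  rcases le_total e.right.1 e'.right.1 with h | h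
  · refine ⟨e.right, hG.right_mem e he, e.left_lt_right, le_rfl, h, e.height_right.le, ?_⟩
    exact e.height_right ▸ (hn.height_lt e.left_lt_right).le
  · refine ⟨e'.right, hG.right_mem e' hn.mem, hlt, h, le_rfl, ?_, e'.height_right.ge⟩
    exact e'.height_right ▸ (hn.height_lt hlt).le

lemma exists_isFirstVertex (hG : IsGeometricGraph V E) (he : e ∈ E) (hn : IsNextEdge E e e') :
    ∃ w, IsFirstVertex V e e' w := by
  classical
  obtain ⟨z, hz, hzw⟩ := hG.exists_mem_wedge he hn
  obtain ⟨w, hw, hmin⟩ := Finset.exists_min_image {w ∈ V | w ∈ wedge e e'} Prod.fst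
    ⟨z, Finset.mem_filter.2 ⟨hz, hzw⟩⟩
  obtain ⟨hwV, hww⟩ := Finset.mem_filter.1 hw
  exact ⟨w, hwV, hww, fun y hy hyw => hmin y (Finset.mem_filter.2 ⟨hy, hyw⟩)⟩

lemma isTopEdge_or_exists_apex (hG : IsGeometricGraph V E) (he : e ∈ E) :
    IsTopEdge E e ∨ (∃ w ∈ V, IsLowerApex V E e w) ∨ ∃ w ∈ V, IsUpperApex V E e w := by
  by_cases htop : IsTopEdge E e
  · exact Or.inl htop
  obtain ⟨e', hn⟩ := exists_isNextEdge htop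
  obtain ⟨w, hw⟩ := hG.exists_isFirstVertex he hn
  rcases hw.mem_wedge.2.2.2.2.lt_or_eq with h | h
  · exact Or.inr (Or.inl ⟨w, hw.mem, e', hn, hw, h⟩)
  · exact Or.inr (Or.inr ⟨w, hw.mem, e', hn, hw, h⟩)

lemma eq_of_isTopEdge (hG : IsGeometricGraph V E) (he : e ∈ E) (hf : f ∈ E)
    (hetop : IsTopEdge E e) (hftop : IsTopEdge E f) (hleft : e.left = f.left) : e = f := by
  have hslope : e.slope = f.slope :=
    le_antisymm (hftop e he hleft.symm) (hetop f hf hleft)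
  refine hG.eq_of_height_eq he hf ?_ (hleft ▸ f.left_lt_right) (hleft ▸ e.left_lt_right)
  ext x
  simp only [Edge.height, hslope, hleft]

/- An edge entering the wedge to the left of its first vertex cannot leave it through a side, so
it would have to start inside the wedge, at the tip between the two consecutive sides, or pass
through the tip; each is impossible. -/
lemma eq_or_eq_of_mem_wedge (hG : IsGeometricGraph V E)
    (hplane : ∀ e ∈ E, ∀ f ∈ E, ¬ e.Crosses f) (he : e ∈ E) (hf : f ∈ E)
    (hn : IsNextEdge E e e') (hw : IsFirstVertex V e e' w) {x : ℝ} (hex : e.left.1 < x)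
    (hfx : f.left.1 < x) (hxw : x < w.1) (hwf : w.1 ≤ f.right.1)
    (hlower : e.height x ≤ f.height x) (hupper : f.height x ≤ e'.height x) :
    f = e ∨ f = e' := by
  by_contra! hne
  obtain ⟨hfe, hfe'⟩ := hne
  obtain ⟨-, hwe, hwe', -⟩ := hw.mem_wedge
  have hxe : x < e.right.1 := hxw.trans_le hwe
  have hxe' : x < e'.right.1 := hxw.trans_le hwe'
  have hxf : x < f.right.1 := hxw.trans_le hwf
  have hle_e {s : ℝ} (hes : e.left.1 ≤ s) (hfs : f.left.1 ≤ s) (hsx : s < x) :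
      e.height s ≤ f.height s :=
    Edge.height_le_of_not_crosses hfe.symm (hplane e he f hf) hes hfs hsx hxe hxf hlower
  have hle_e' {s : ℝ} (hes : e.left.1 ≤ s) (hfs : f.left.1 ≤ s) (hsx : s < x) :
      f.height s ≤ e'.height s :=
    Edge.height_le_of_not_crosses hfe' (hplane f hf e' hn.mem) hfs (hn.left_eq ▸ hes) hsx hxf
      hxe' hupper
  rcases lt_trichotomy e.left.1 f.left.1 with h | h | h
  · have hmem : f.left ∈ wedge e e' := by
      refine ⟨h, (hfx.trans hxe).le, (hfx.trans hxe').le, ?_, ?_⟩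
      · exact f.height_left ▸ hle_e h.le le_rfl hfx
      · exact f.height_left ▸ hle_e' h.le le_rfl hfx
    exact (hfx.trans hxw).not_ge (hw.fst_le _ (hG.left_mem f hf) hmem)
  · have hleft : e.left = f.left := hG.injOn_fst (hG.left_mem e he) (hG.left_mem f hf) h
    have hlt := Edge.height_lt_of_not_crosses hfe.symm (hplane e he f hf) hex hfx hxe hxf hlower
    have hlt' := Edge.height_lt_of_not_crosses hfe' (hplane f hf e' hn.mem) hfx
      (hn.left_eq ▸ hex) hxf hxe' hupper
    exact hlt'.not_ge (hn.height_le hf hleft hex hlt)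
  · have htip : e.left.2 = f.height e.left.1 := by
      refine le_antisymm (e.height_left ▸ hle_e le_rfl h.le hex) ?_
      rw [hn.left_eq, ← e'.height_left, ← hn.left_eq]
      exact hle_e' le_rfl h.le hex
    exact hG.notMem_interior f hf _ (hG.left_mem e he)
      (Edge.mem_interior.2 ⟨h, hex.trans hxf, htip⟩)

lemma eq_of_isFirstVertex (hG : IsGeometricGraph V E)
    (hplane : ∀ e ∈ E, ∀ f ∈ E, ¬ e.Crosses f) (he : e ∈ E) (hf : f ∈ E)
    (hne : IsNextEdge E e e') (hnf : IsNextEdge E f f') (hwe : IsFirstVertex V e e' w)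
    (hwf : IsFirstVertex V f f' w) (hfe' : f.height w.1 < e'.height w.1)
    (hef' : e.height w.1 < f'.height w.1) : e = f := by
  have hnear : ∀ᶠ x in nhdsWithin w.1 (Iio w.1), x < w.1 ∧ e.left.1 < x ∧ f.left.1 < x ∧
      f.height x < e'.height x ∧ e.height x < f'.height x := by
    refine eventually_mem_nhdsWithin.and (Filter.Eventually.filter_mono nhdsWithin_le_nhds ?_)
    exact (eventually_gt_nhds hwe.mem_wedge.1).and <| (eventually_gt_nhds hwf.mem_wedge.1).and <|
      (f.continuous_height.continuousAt.eventually_lt e'.continuous_height.continuousAt hfe').and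
      (e.continuous_height.continuousAt.eventually_lt f'.continuous_height.continuousAt hef')
  obtain ⟨x, hxw, hex, hfx, hfe'x, hef'x⟩ := hnear.exists
  rcases le_total (e.height x) (f.height x) with h | h
  · rcases hG.eq_or_eq_of_mem_wedge hplane he hf hne hwe hex hfx hxw hwf.mem_wedge.2.1 h hfe'x.le
      with rfl | rfl
    · rfl
    · exact absurd hfe'x (lt_irrefl _)
  · rcases hG.eq_or_eq_of_mem_wedge hplane hf he hnf hwf hfx hex hxw hwe.mem_wedge.2.1 h hef'x.le
      with rfl | rfl
    · rfl
    · exact absurd hef'x (lt_irrefl _)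

lemma eq_of_isLowerApex (hG : IsGeometricGraph V E)
    (hplane : ∀ e ∈ E, ∀ f ∈ E, ¬ e.Crosses f) (he : e ∈ E) (hf : f ∈ E)
    (hwe : IsLowerApex V E e w) (hwf : IsLowerApex V E f w) : e = f := by
  obtain ⟨e', hne, hwe, hwe'⟩ := hwe
  obtain ⟨f', hnf, hwf, hwf'⟩ := hwf
  exact hG.eq_of_isFirstVertex hplane he hf hne hnf hwe hwf
    (hwf.mem_wedge.2.2.2.1.trans_lt hwe') (hwe.mem_wedge.2.2.2.1.trans_lt hwf')

lemma eq_of_isUpperApex (hG : IsGeometricGraph V E)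
    (hplane : ∀ e ∈ E, ∀ f ∈ E, ¬ e.Crosses f) (he : e ∈ E) (hf : f ∈ E)
    (hwe : IsUpperApex V E e w) (hwf : IsUpperApex V E f w) : e = f := by
  obtain ⟨e', hne, hwe, hwe'⟩ := hwe
  obtain ⟨f', hnf, hwf, hwf'⟩ := hwf
  have hlt_e := hne.height_lt hwe.mem_wedge.1
  have hlt_f := hnf.height_lt hwf.mem_wedge.1
  rw [← hwe'] at hlt_e
  rw [← hwf'] at hlt_f
  exact hG.eq_of_isFirstVertex hplane he hf hne hnf hwe hwf (hwe' ▸ hlt_f) (hwf' ▸ hlt_e)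

lemma card_le_three_mul_of_not_crosses (hG : IsGeometricGraph V E)
    (hplane : ∀ e ∈ E, ∀ f ∈ E, ¬ e.Crosses f) : #E ≤ 3 * #V := by
  classical
  have hcover : E ⊆ {e ∈ E | IsTopEdge E e} ∪ ({e ∈ E | ∃ w ∈ V, IsLowerApex V E e w} ∪
      {e ∈ E | ∃ w ∈ V, IsUpperApex V E e w}) := fun e he => by
    simpa [he] using hG.isTopEdge_or_exists_apex he
  have htop : #{e ∈ E | IsTopEdge E e} ≤ #V := by
    refine Finset.card_le_card_of_injOn Edge.left
      (fun e he => hG.left_mem e (Finset.mem_filter.1 he).1) fun e he f hf hleft => ?_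
    obtain ⟨he, hetop⟩ := Finset.mem_filter.1 he
    obtain ⟨hf, hftop⟩ := Finset.mem_filter.1 hf
    exact hG.eq_of_isTopEdge he hf hetop hftop hleft
  have hlower : #{e ∈ E | ∃ w ∈ V, IsLowerApex V E e w} ≤ #V :=
    Finset.card_le_card_of_forall_subsingleton (IsLowerApex V E)
      (fun e he => (Finset.mem_filter.1 he).2) fun w _ e he f hf =>
        hG.eq_of_isLowerApex hplane (Finset.mem_filter.1 he.1).1 (Finset.mem_filter.1 hf.1).1
          he.2 hf.2
  have hupper : #{e ∈ E | ∃ w ∈ V, IsUpperApex V E e w} ≤ #V :=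
    Finset.card_le_card_of_forall_subsingleton (IsUpperApex V E)
      (fun e he => (Finset.mem_filter.1 he).2) fun w _ e he f hf =>
        hG.eq_of_isUpperApex hplane (Finset.mem_filter.1 he.1).1 (Finset.mem_filter.1 hf.1).1
          he.2 hf.2
  calc #E ≤ _ := Finset.card_le_card hcover
    _ ≤ _ := Finset.card_union_le _ _
    _ ≤ #V + (#V + #V) := add_le_add htop ((Finset.card_union_le _ _).trans
        (add_le_add hlower hupper))
    _ = 3 * #V := by ring

lemma card_le_add_card_crossings (hG : IsGeometricGraph V E) :
    #E ≤ 3 * #V + #(crossings E) := by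
  classical
  have hplane : #(E \ (crossings E).image Prod.fst) ≤ 3 * #V := by
    refine (hG.anti_edges Finset.sdiff_subset).card_le_three_mul_of_not_crosses
      fun e he f hf h => ?_
    rw [Finset.mem_sdiff] at he hf
    exact he.2 (Finset.mem_image.2 ⟨(e, f), mem_crossings.2 ⟨⟨he.1, hf.1⟩, h⟩, rfl⟩)
  calc #E ≤ #(E \ (crossings E).image Prod.fst) + #((crossings E).image Prod.fst) :=
        tsub_le_iff_right.1 (Finset.le_card_sdiff _ _)
    _ ≤ 3 * #V + #(crossings E) := add_le_add hplane Finset.card_image_le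

end IsGeometricGraph

section RandomSubset

variable {α ι : Type*}

/-- The probability that a random subset of `V`, containing each element independently with
probability `p`, equals `S`; meant for `S ⊆ V`, as the subtraction is truncated. -/
def bernoulliWeight (p : ℝ) (V S : Finset α) : ℝ := p ^ #S * (1 - p) ^ (#V - #S)

lemma bernoulliWeight_nonneg {p : ℝ} (hp0 : 0 ≤ p) (hp1 : p ≤ 1) (V S : Finset α) :
    0 ≤ bernoulliWeight p V S :=
  mul_nonneg (pow_nonneg hp0 _) (pow_nonneg (sub_nonneg.2 hp1) _)

variable [DecidableEq α]

lemma sum_bernoulliWeight_of_subset (p : ℝ) {V A : Finset α} (hA : A ⊆ V) :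
    ∑ S ∈ V.powerset with A ⊆ S, bernoulliWeight p V S = p ^ #A := by
  have hdisj {T : Finset α} (hT : T ∈ (V \ A).powerset) : Disjoint A T :=
    Finset.disjoint_sdiff.mono_right (Finset.mem_powerset.1 hT)
  have hIcc : {S ∈ V.powerset | A ⊆ S} = (V \ A).powerset.image (A ∪ ·) := by
    rw [← Finset.Icc_eq_image_powerset hA]
    ext S
    simp [and_comm]
  have hinj : InjOn (A ∪ ·) ((V \ A).powerset : Set (Finset α)) := fun T hT T' hT' h => by
    rw [← Finset.union_sdiff_cancel_left (hdisj hT), ← Finset.union_sdiff_cancel_left (hdisj hT')]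
    exact congrArg (· \ A) h
  calc ∑ S ∈ V.powerset with A ⊆ S, bernoulliWeight p V S
      = ∑ T ∈ (V \ A).powerset, p ^ #A * (p ^ #T * (1 - p) ^ (#(V \ A) - #T)) := by
        rw [hIcc, Finset.sum_image hinj]
        refine Finset.sum_congr rfl fun T hT => ?_
        rw [bernoulliWeight, Finset.card_union_of_disjoint (hdisj hT),
          Finset.card_sdiff_of_subset hA, pow_add, mul_assoc, Nat.sub_sub]
    _ = p ^ #A := by
        rw [← Finset.mul_sum, Finset.sum_pow_mul_eq_add_pow]
        simp

lemma sum_bernoulliWeight_mul_card_filter (p : ℝ) {V : Finset α} {Y : Finset ι}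
    {F : ι → Finset α} {k : ℕ} (hF : ∀ y ∈ Y, F y ⊆ V) (hk : ∀ y ∈ Y, #(F y) = k) :
    ∑ S ∈ V.powerset, bernoulliWeight p V S * #{y ∈ Y | F y ⊆ S} = p ^ k * #Y :=
  calc ∑ S ∈ V.powerset, bernoulliWeight p V S * #{y ∈ Y | F y ⊆ S}
      = ∑ S ∈ V.powerset, ∑ y ∈ Y, if F y ⊆ S then bernoulliWeight p V S else 0 := by
        refine Finset.sum_congr rfl fun S _ => ?_
        rw [← Finset.sum_filter, Finset.sum_const, nsmul_eq_mul, mul_comm]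
    _ = ∑ _ ∈ Y, p ^ k := by
        rw [Finset.sum_comm]
        refine Finset.sum_congr rfl fun y hy => ?_
        rw [← Finset.sum_filter, sum_bernoulliWeight_of_subset p (hF y hy), hk y hy]
    _ = p ^ k * #Y := by rw [Finset.sum_const, nsmul_eq_mul, mul_comm]

end RandomSubset

namespace IsGeometricGraph

variable {V : Finset (ℝ × ℝ)} {E : Finset Edge}

lemma card_filter_endpoints_subset_le (hG : IsGeometricGraph V E) {S : Finset (ℝ × ℝ)}
    (hS : S ⊆ V) : #{e ∈ E | e.endpoints ⊆ S} ≤ 3 * #{v ∈ V | {v} ⊆ S} +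
      #{ef ∈ crossings E | ef.1.endpoints ∪ ef.2.endpoints ⊆ S} := by
  have hV : {v ∈ V | {v} ⊆ S} = S := by
    simpa only [Finset.singleton_subset_iff, Finset.filter_mem_eq_inter] using
      Finset.inter_eq_right.2 hS
  have hcross : crossings {e ∈ E | e.endpoints ⊆ S} ⊆
      {ef ∈ crossings E | ef.1.endpoints ∪ ef.2.endpoints ⊆ S} := fun ef hef => by
    simp only [mem_crossings, Finset.mem_filter, Finset.union_subset_iff] at hef ⊢
    tauto
  rw [hV]
  grw [(hG.induce hS).card_le_add_card_crossings, hcross]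

lemma sq_mul_card_le (hG : IsGeometricGraph V E) {p : ℝ} (hp0 : 0 ≤ p) (hp1 : p ≤ 1) :
    p ^ 2 * #E ≤ 3 * (p * #V) + p ^ 4 * #(crossings E) := by
  have hsub : ∀ ef ∈ crossings E, ef.1.endpoints ∪ ef.2.endpoints ⊆ V := fun ef hef =>
    Finset.union_subset (hG.endpoints_subset (mem_crossings.1 hef).1.1)
      (hG.endpoints_subset (mem_crossings.1 hef).1.2)
  have hfour : ∀ ef ∈ crossings E, #(ef.1.endpoints ∪ ef.2.endpoints) = 4 := fun ef hef => by
    obtain ⟨⟨he, hf⟩, hcross⟩ := mem_crossings.1 hef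
    rw [Finset.card_union_of_disjoint (hG.disjoint_endpoints_of_crosses he hf hcross),
      ef.1.card_endpoints, ef.2.card_endpoints]
  have hE := sum_bernoulliWeight_mul_card_filter p (fun e he => hG.endpoints_subset he)
    fun e (_ : e ∈ E) => e.card_endpoints
  have hV := sum_bernoulliWeight_mul_card_filter p
    (fun v (hv : v ∈ V) => Finset.singleton_subset_iff.2 hv) fun v _ => Finset.card_singleton v
  have hX := sum_bernoulliWeight_mul_card_filter p hsub hfour
  calc p ^ 2 * #E
      = ∑ S ∈ V.powerset, bernoulliWeight p V S * #{e ∈ E | e.endpoints ⊆ S} := hE.symm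
    _ ≤ ∑ S ∈ V.powerset, bernoulliWeight p V S * (3 * #{v ∈ V | {v} ⊆ S} +
          #{ef ∈ crossings E | ef.1.endpoints ∪ ef.2.endpoints ⊆ S}) := by
        refine Finset.sum_le_sum fun S hS => mul_le_mul_of_nonneg_left ?_
          (bernoulliWeight_nonneg hp0 hp1 V S)
        exact_mod_cast hG.card_filter_endpoints_subset_le (Finset.mem_powerset.1 hS)
    _ = 3 * (p * #V) + p ^ 4 * #(crossings E) := by
        simp only [mul_add, Finset.sum_add_distrib, mul_left_comm _ (3 : ℝ), ← Finset.mul_sum]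
        rw [hV, hX, pow_one]

/- The sampling probability `6 #V / #E` balances the two terms of the previous bound. -/
theorem card_pow_three_le (hG : IsGeometricGraph V E) (h : 6 * #V ≤ #E) :
    (#E : ℝ) ^ 3 ≤ 72 * #V ^ 2 * #(crossings E) := by
  rcases E.eq_empty_or_nonempty with rfl | ⟨e, he⟩
  · simp only [Finset.card_empty, Nat.cast_zero, ne_eq, OfNat.ofNat_ne_zero, not_false_eq_true,
      zero_pow]
    positivity
  have hE : (0 : ℝ) < #E := by exact_mod_cast Finset.card_pos.2 ⟨e, he⟩
  have hV : (0 : ℝ) < #V := by exact_mod_cast Finset.card_pos.2 ⟨_, hG.left_mem e he⟩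
  have hp1 : 6 * (#V : ℝ) / #E ≤ 1 := (div_le_one hE).2 (by exact_mod_cast h)
  have hsample := hG.sq_mul_card_le (by positivity) hp1
  field_simp at hsample
  linarith

end IsGeometricGraph

section Lines

variable {S : Finset (ℝ × ℝ)} {ℓ : Set (ℝ × ℝ)}

lemma IsLine.eq_lineThrough (hℓ : IsLine ℓ) {p q : ℝ × ℝ} (hpq : p ≠ q) (hp : p ∈ ℓ)
    (hq : q ∈ ℓ) : ℓ = lineThrough p q := by
  obtain ⟨a, b, -, rfl⟩ := hℓ
  exact congrArg SetLike.coe (affineSpan_pair_eq_of_mem_of_mem_of_ne hp hq hpq).symm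

lemma IsLine.image (hℓ : IsLine ℓ) {f : ℝ × ℝ →ₗ[ℝ] ℝ × ℝ} (hf : Function.Injective f) :
    IsLine (f '' ℓ) := by
  obtain ⟨p, q, hpq, rfl⟩ := hℓ
  refine ⟨f p, f q, hf.ne hpq, ?_⟩
  have h := congrArg SetLike.coe (AffineSubspace.map_span f.toAffineMap {p, q})
  simpa [lineThrough, image_pair] using h

open scoped Classical in
lemma richness_eq_card_filter (S : Finset (ℝ × ℝ)) (ℓ : Set (ℝ × ℝ)) :
    richness S ℓ = #{p ∈ S | p ∈ ℓ} := by
  rw [richness, ← ncard_coe_finset, Finset.coe_filter]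
  rfl

lemma richness_image {f : ℝ × ℝ → ℝ × ℝ} (hf : f.Injective) (S : Finset (ℝ × ℝ))
    (ℓ : Set (ℝ × ℝ)) : richness (S.image f) (f '' ℓ) = richness S ℓ := by
  rw [richness, Finset.coe_image, ← image_inter hf, ncard_image_of_injective _ hf, richness]

lemma richness_lineThrough_self_le (S : Finset (ℝ × ℝ)) (p : ℝ × ℝ) :
    richness S (lineThrough p p) ≤ 1 := by
  have hline : lineThrough p p = {p} := by simp [lineThrough]
  rw [richness, hline]
  exact (ncard_le_ncard inter_subset_right).trans (ncard_singleton p).le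

/- Shear by a factor avoiding the finitely many slopes determined by `S`. -/
lemma exists_injective_linearMap_injOn_fst (S : Finset (ℝ × ℝ)) :
    ∃ f : ℝ × ℝ →ₗ[ℝ] ℝ × ℝ, Function.Injective f ∧
      InjOn Prod.fst ((S.image f : Finset (ℝ × ℝ)) : Set (ℝ × ℝ)) := by
  obtain ⟨t, ht⟩ := Infinite.exists_notMem_finset
    ((S ×ˢ S).image fun pq => (pq.2.1 - pq.1.1) / (pq.1.2 - pq.2.2))
  refine ⟨(LinearMap.fst ℝ ℝ ℝ + t • LinearMap.snd ℝ ℝ ℝ).prod (LinearMap.snd ℝ ℝ ℝ), ?_, ?_⟩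
  · intro p q h
    have h1 : p.1 + t * p.2 = q.1 + t * q.2 := (Prod.ext_iff.1 h).1
    have h2 : p.2 = q.2 := (Prod.ext_iff.1 h).2
    exact Prod.ext (by simpa [h2] using h1) h2
  · rw [Finset.coe_image]
    refine InjOn.image_of_comp fun p hp q hq h => ?_
    have h1 : p.1 + t * p.2 = q.1 + t * q.2 := by simpa using h
    suffices h2 : p.2 = q.2 from Prod.ext (by simpa [h2] using h1) h2
    by_contra h2
    refine ht (Finset.mem_image.2 ⟨(p, q), Finset.mk_mem_product hp hq, ?_⟩)
    rw [div_eq_iff (sub_ne_zero.2 h2)]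
    linarith

end Lines

section LineGraph

variable {S : Finset (ℝ × ℝ)} {L : Finset (Set (ℝ × ℝ))} {ℓ : Set (ℝ × ℝ)}

lemma Edge.injective_left_right : Function.Injective fun e : Edge => (e.left, e.right) :=
  fun _ _ h => Edge.ext (congrArg Prod.fst h) (congrArg Prod.snd h)

open scoped Classical in
/-- The edges joining points of `S` that are consecutive on some line of `L`. -/
def consecutiveEdges (S : Finset (ℝ × ℝ)) (L : Finset (Set (ℝ × ℝ))) : Finset Edge :=
  {e ∈ (S ×ˢ S).preimage (fun e : Edge => (e.left, e.right)) Edge.injective_left_right.injOn |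
    e.line ∈ L ∧ ∀ w ∈ S, w ∉ e.interior}

lemma mem_consecutiveEdges {e : Edge} : e ∈ consecutiveEdges S L ↔
    (e.left ∈ S ∧ e.right ∈ S) ∧ e.line ∈ L ∧ ∀ w ∈ S, w ∉ e.interior := by
  simp [consecutiveEdges]

lemma isGeometricGraph_consecutiveEdges (hS : InjOn Prod.fst (S : Set (ℝ × ℝ)))
    (L : Finset (Set (ℝ × ℝ))) : IsGeometricGraph S (consecutiveEdges S L) where
  injOn_fst := hS
  left_mem _ he := (mem_consecutiveEdges.1 he).1.1
  right_mem _ he := (mem_consecutiveEdges.1 he).1.2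
  notMem_interior _ he := (mem_consecutiveEdges.1 he).2.2

lemma exists_consecutiveEdge_left_eq (hℓL : ℓ ∈ L) (hℓ : IsLine ℓ) {u m : ℝ × ℝ} (hu : u ∈ S)
    (huℓ : u ∈ ℓ) (hm : m ∈ S) (hmℓ : m ∈ ℓ) (hum : u.1 < m.1) :
    ∃ e ∈ consecutiveEdges S L, e.line = ℓ ∧ e.left = u := by
  classical
  obtain ⟨v, hv, hmin⟩ := Finset.exists_min_image {v ∈ S | v ∈ ℓ ∧ u.1 < v.1} Prod.fst
    ⟨m, Finset.mem_filter.2 ⟨hm, hmℓ, hum⟩⟩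
  obtain ⟨hvS, hvℓ, huv⟩ := Finset.mem_filter.1 hv
  let e : Edge := ⟨u, v, huv⟩
  have hline : e.line = ℓ := (hℓ.eq_lineThrough (fun h => huv.ne (by rw [h])) huℓ hvℓ).symm
  refine ⟨e, mem_consecutiveEdges.2 ⟨⟨hu, hvS⟩, hline ▸ hℓL, fun w hw hwe => ?_⟩, hline, rfl⟩
  have hwℓ : w ∈ ℓ := hline ▸ e.interior_subset_line hwe
  obtain ⟨huw, hwv, -⟩ := Edge.mem_interior.1 hwe
  exact hwv.not_ge (hmin w (Finset.mem_filter.2 ⟨hw, hwℓ, huw⟩))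

open scoped Classical in
lemma richness_le_card_consecutiveEdges_add_one (hS : InjOn Prod.fst (S : Set (ℝ × ℝ)))
    (hℓL : ℓ ∈ L) (hℓ : IsLine ℓ) :
    richness S ℓ ≤ #{e ∈ consecutiveEdges S L | e.line = ℓ} + 1 := by
  rw [richness_eq_card_filter]
  rcases Finset.eq_empty_or_nonempty {p ∈ S | p ∈ ℓ} with hempty | hne
  · simp [hempty]
  obtain ⟨m, hm, hmax⟩ := Finset.exists_max_image _ Prod.fst hne
  obtain ⟨hmS, hmℓ⟩ := Finset.mem_filter.1 hm
  have hsub : ({p ∈ S | p ∈ ℓ} : Finset (ℝ × ℝ)).erase m ⊆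
      {e ∈ consecutiveEdges S L | e.line = ℓ}.image Edge.left := fun u hu => by
    obtain ⟨hum, hu⟩ := Finset.mem_erase.1 hu
    obtain ⟨huS, huℓ⟩ := Finset.mem_filter.1 hu
    have hlt : u.1 < m.1 := (hmax u hu).lt_of_ne fun h => hum (hS huS hmS h)
    obtain ⟨e, he, heℓ, rfl⟩ := exists_consecutiveEdge_left_eq hℓL hℓ huS huℓ hmS hmℓ hlt
    exact Finset.mem_image_of_mem _ (Finset.mem_filter.2 ⟨he, heℓ⟩)
  rw [← Finset.card_erase_add_one hm]
  grw [hsub, Finset.card_image_le]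

lemma card_mul_le_card_consecutiveEdges (hS : InjOn Prod.fst (S : Set (ℝ × ℝ)))
    (hL : ∀ ℓ ∈ L, IsLine ℓ) {k : ℕ} (hk : ∀ ℓ ∈ L, k + 1 ≤ richness S ℓ) :
    #L * k ≤ #(consecutiveEdges S L) := by
  classical
  rw [Finset.card_eq_sum_card_fiberwise (f := Edge.line) (t := L)
    fun e he => (mem_consecutiveEdges.1 he).2.1]
  refine Finset.card_nsmul_le_sum _ _ _ fun ℓ hℓ => ?_
  exact Nat.le_of_add_le_add_right
    ((hk ℓ hℓ).trans (richness_le_card_consecutiveEdges_add_one hS hℓ (hL ℓ hℓ)))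

/- Two lines meet in one point, and an edge is determined by its line and an interior point. -/
lemma card_crossings_consecutiveEdges_le (hS : InjOn Prod.fst (S : Set (ℝ × ℝ)))
    (L : Finset (Set (ℝ × ℝ))) : #(crossings (consecutiveEdges S L)) ≤ #L ^ 2 := by
  have hG := isGeometricGraph_consecutiveEdges hS L
  have eq_of_line_eq {e f : Edge} (he : e ∈ consecutiveEdges S L)
      (hf : f ∈ consecutiveEdges S L) (h : e.line = f.line) {z : ℝ × ℝ} (hze : z ∈ e.interior)
      (hzf : z ∈ f.interior) : e = f :=
    hG.eq_of_height_eq_of_mem_interior he hf (Edge.height_eq_height_of_line_eq h) hze hzf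
  rw [sq, ← Finset.card_product]
  refine Finset.card_le_card_of_injOn (fun ef => (ef.1.line, ef.2.line)) ?_ ?_
  · intro ef hef
    obtain ⟨⟨he, hf⟩, -⟩ := mem_crossings.1 hef
    exact Finset.mk_mem_product (mem_consecutiveEdges.1 he).2.1 (mem_consecutiveEdges.1 hf).2.1
  · rintro ⟨e, f⟩ hef ⟨e', f'⟩ hef' heq
    obtain ⟨⟨he, hf⟩, hne, z, hze, hzf⟩ := mem_crossings.1 hef
    obtain ⟨⟨he', hf'⟩, -, z', hze', hzf'⟩ := mem_crossings.1 hef'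
    obtain ⟨heline, hfline⟩ : e.line = e'.line ∧ f.line = f'.line := Prod.ext_iff.1 heq
    obtain rfl : z = z' := by
      by_contra hzz
      refine hne (eq_of_line_eq he hf (Edge.line_eq_line_of_mem hzz ?_ ?_ ?_ ?_) hze hzf)
      · exact e.interior_subset_line hze
      · exact heline ▸ e'.interior_subset_line hze'
      · exact f.interior_subset_line hzf
      · exact hfline ▸ f'.interior_subset_line hzf'
    exact Prod.ext (eq_of_line_eq he he' heline hze hze') (eq_of_line_eq hf hf' hfline hzf hzf')

end LineGraph

section RichLines

variable {S : Finset (ℝ × ℝ)} {L : Finset (Set (ℝ × ℝ))} {k : ℕ}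

lemma card_mul_le_two_mul_card_consecutiveEdges (hS : InjOn Prod.fst (S : Set (ℝ × ℝ)))
    (hL : ∀ ℓ ∈ L, IsLine ℓ) (hk2 : 2 ≤ k) (hk : ∀ ℓ ∈ L, k ≤ richness S ℓ) :
    #L * k ≤ 2 * #(consecutiveEdges S L) := by
  obtain ⟨j, rfl⟩ := Nat.exists_eq_add_of_le' hk2
  have hcard : #L * (j + 1) ≤ #(consecutiveEdges S L) :=
    card_mul_le_card_consecutiveEdges hS hL hk
  calc #L * (j + 2) ≤ #L * (2 * (j + 1)) := by gcongr; omega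
    _ = 2 * (#L * (j + 1)) := by ring
    _ ≤ 2 * #(consecutiveEdges S L) := by gcongr

lemma card_consecutiveEdges_pow_three_le (hS : InjOn Prod.fst (S : Set (ℝ × ℝ)))
    (h : 6 * #S ≤ #(consecutiveEdges S L)) :
    (#(consecutiveEdges S L) : ℝ) ^ 3 ≤ 72 * #S ^ 2 * #L ^ 2 := by
  have hcross : (#(crossings (consecutiveEdges S L)) : ℝ) ≤ #L ^ 2 := by
    exact_mod_cast card_crossings_consecutiveEdges_le hS L
  grw [← hcross]
  exact (isGeometricGraph_consecutiveEdges hS L).card_pow_three_le h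

lemma card_le_of_le_richness_of_injOn_fst (hS : InjOn Prod.fst (S : Set (ℝ × ℝ)))
    (hL : ∀ ℓ ∈ L, IsLine ℓ) (hk2 : 2 ≤ k) (hk : ∀ ℓ ∈ L, k ≤ richness S ℓ) :
    (#L : ℝ) ≤ 12 * #S / k + 576 * #S ^ 2 / k ^ 3 := by
  have hedges : (#L : ℝ) * k ≤ 2 * #(consecutiveEdges S L) := by
    exact_mod_cast card_mul_le_two_mul_card_consecutiveEdges hS hL hk2 hk
  have hk0 : (0 : ℝ) < k := by positivity
  rcases lt_or_ge #(consecutiveEdges S L) (6 * #S) with hfew | hmany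
  · have hfew : (#(consecutiveEdges S L) : ℝ) ≤ 6 * #S := by exact_mod_cast hfew.le
    have : (#L : ℝ) ≤ 12 * #S / k := by
      rw [le_div_iff₀ hk0]
      linarith
    exact this.trans (le_add_of_nonneg_right (by positivity))
  · have hcube : (#L : ℝ) ^ 2 * (#L * k ^ 3) ≤ #L ^ 2 * (576 * #S ^ 2) :=
      calc (#L : ℝ) ^ 2 * (#L * k ^ 3) = (#L * k) ^ 3 := by ring
        _ ≤ (2 * (#(consecutiveEdges S L) : ℝ)) ^ 3 := by gcongr
        _ = 8 * (#(consecutiveEdges S L) : ℝ) ^ 3 := by ring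
        _ ≤ 8 * (72 * #S ^ 2 * #L ^ 2) := by
          gcongr
          exact card_consecutiveEdges_pow_three_le hS hmany
        _ = #L ^ 2 * (576 * #S ^ 2) := by ring
    have : (#L : ℝ) ≤ 576 * #S ^ 2 / k ^ 3 := by
      rcases (Nat.cast_nonneg (α := ℝ) #L).eq_or_lt with h0 | hpos
      · rw [← h0]
        positivity
      · rw [le_div_iff₀ (by positivity)]
        exact le_of_mul_le_mul_left hcube (by positivity)
    exact this.trans (le_add_of_nonneg_left (by positivity))

theorem card_le_of_le_richness (hL : ∀ ℓ ∈ L, IsLine ℓ) (hk2 : 2 ≤ k)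
    (hk : ∀ ℓ ∈ L, k ≤ richness S ℓ) : (#L : ℝ) ≤ 12 * #S / k + 576 * #S ^ 2 / k ^ 3 := by
  classical
  obtain ⟨f, hf, hfS⟩ := exists_injective_linearMap_injOn_fst S
  have h := card_le_of_le_richness_of_injOn_fst (L := L.image (f '' ·)) hfS
    (Finset.forall_mem_image.2 fun ℓ hℓ => (hL ℓ hℓ).image hf) hk2
    (Finset.forall_mem_image.2 fun ℓ hℓ => (hk ℓ hℓ).trans_eq (richness_image hf S ℓ).symm)
  rwa [Finset.card_image_of_injective _ hf.image_injective,
    Finset.card_image_of_injective _ hf] at h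

end RichLines

section LayerSums

variable {ι : Type*} {L : Finset ι} {r : ι → ℕ} {C M : ℕ}

lemma sq_le_sq_add_sum_Ioc {C k : ℕ} (h : C ≤ k) :
    k ^ 2 ≤ C ^ 2 + ∑ j ∈ Finset.Ioc C k, 2 * j := by
  induction k, h using Nat.le_induction with
  | base => simp
  | succ k hCk ih =>
    rw [Finset.sum_Ioc_succ_top hCk]
    linarith

lemma sum_sq_le_sum_card_filter_le (hC : ∀ i ∈ L, C ≤ r i) (hM : ∀ i ∈ L, r i ≤ M) :
    ∑ i ∈ L, r i ^ 2 ≤ C ^ 2 * #L + ∑ j ∈ Finset.Ioc C M, 2 * j * #{i ∈ L | j ≤ r i} :=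
  calc ∑ i ∈ L, r i ^ 2
      ≤ ∑ i ∈ L, (C ^ 2 + ∑ j ∈ Finset.Ioc C M, if j ≤ r i then 2 * j else 0) := by
        refine Finset.sum_le_sum fun i hi => (sq_le_sq_add_sum_Ioc (hC i hi)).trans_eq ?_
        have hIoc : {j ∈ Finset.Ioc C M | j ≤ r i} = Finset.Ioc C (r i) := by
          ext j
          have := hM i hi
          simp only [Finset.mem_filter, Finset.mem_Ioc]
          omega
        rw [← Finset.sum_filter, hIoc]
    _ = C ^ 2 * #L + ∑ j ∈ Finset.Ioc C M, 2 * j * #{i ∈ L | j ≤ r i} := by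
        rw [Finset.sum_add_distrib, Finset.sum_comm]
        simp only [← Finset.sum_filter, Finset.sum_const, smul_eq_mul, mul_comm]

lemma sum_sq_le_of_card_filter_le {a b : ℝ} (ha : 0 ≤ a) (hb : 0 ≤ b) (hC0 : 0 < C)
    (hC : ∀ i ∈ L, C ≤ r i) (hM : ∀ i ∈ L, r i ≤ M)
    (htail : ∀ j, C ≤ j → (#{i ∈ L | j ≤ r i} : ℝ) ≤ a / j + b / j ^ 3) :
    ∑ i ∈ L, (r i : ℝ) ^ 2 ≤ 2 * a * M + 3 * b / C := by
  rcases L.eq_empty_or_nonempty with rfl | ⟨i, hi⟩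
  · rw [Finset.sum_empty]
    positivity
  have hCM : C ≤ M := (hC i hi).trans (hM i hi)
  have hbase : (C : ℝ) ^ 2 * #L ≤ a * C + b / C := by
    have h := htail C le_rfl
    rw [Finset.filter_true_of_mem hC] at h
    calc (C : ℝ) ^ 2 * #L ≤ C ^ 2 * (a / C + b / C ^ 3) := by gcongr
      _ = a * C + b / C := by field_simp
  have hlayer : ∀ j ∈ Finset.Ioc C M,
      (2 * j * #{i ∈ L | j ≤ r i} : ℝ) ≤ 2 * a + 2 * b * ((j : ℝ) ^ 2)⁻¹ := fun j hj => by
    have hCj : C < j := (Finset.mem_Ioc.1 hj).1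
    have hj0 : (0 : ℝ) < j := by exact_mod_cast hC0.trans hCj
    calc (2 * j * #{i ∈ L | j ≤ r i} : ℝ) ≤ 2 * j * (a / j + b / j ^ 3) := by
          gcongr
          exact htail j hCj.le
      _ = 2 * a + 2 * b * ((j : ℝ) ^ 2)⁻¹ := by field_simp
  calc ∑ i ∈ L, (r i : ℝ) ^ 2
      ≤ C ^ 2 * #L + ∑ j ∈ Finset.Ioc C M, (2 * j * #{i ∈ L | j ≤ r i} : ℝ) := by
        exact_mod_cast sum_sq_le_sum_card_filter_le hC hM
    _ ≤ (a * C + b / C) + ∑ j ∈ Finset.Ioc C M, (2 * a + 2 * b * ((j : ℝ) ^ 2)⁻¹) :=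
        add_le_add hbase (Finset.sum_le_sum hlayer)
    _ = (a * C + b / C) + ((M - C) * (2 * a) +
          2 * b * ∑ j ∈ Finset.Ioc C M, ((j : ℝ) ^ 2)⁻¹) := by
        rw [Finset.sum_add_distrib, Finset.sum_const, ← Finset.mul_sum, Nat.card_Ioc, nsmul_eq_mul,
          Nat.cast_sub hCM]
    _ ≤ (a * C + b / C) + ((M - C) * (2 * a) + 2 * b * (C : ℝ)⁻¹) := by
        gcongr
        exact (sum_Ioc_inv_sq_le_sub hC0.ne' hCM).trans (sub_le_self _ (by positivity))
    _ = 2 * a * M + 3 * b / C - a * C := by ring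
    _ ≤ 2 * a * M + 3 * b / C := sub_le_self _ (by positivity)

end LayerSums

lemma sum_richness_sq_le {S : Finset (ℝ × ℝ)} {L : Finset (Set (ℝ × ℝ))} {C M : ℕ}
    (hL : ∀ ℓ ∈ L, IsLine ℓ) (hC2 : 2 ≤ C) (hC : ∀ ℓ ∈ L, C ≤ richness S ℓ)
    (hM : ∀ ℓ ∈ L, richness S ℓ ≤ M) :
    ∑ ℓ ∈ L, (richness S ℓ : ℝ) ^ 2 ≤ 24 * #S * M + 1728 * #S ^ 2 / C := by
  have h := sum_sq_le_of_card_filter_le (a := 12 * #S) (b := 576 * #S ^ 2) (by positivity)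
    (by positivity) (two_pos.trans_le hC2) hC hM fun j hj =>
      card_le_of_le_richness (fun ℓ hℓ => hL ℓ (Finset.mem_filter.1 hℓ).1) (hC2.trans hj)
        fun ℓ hℓ => (Finset.mem_filter.1 hℓ).2
  convert h using 2 <;> ring

open scoped Classical in
lemma card_le_sum_richness_sq {S : Finset (ℝ × ℝ)} {A : Finset ((ℝ × ℝ) × (ℝ × ℝ))}
    (hA : A ⊆ S ×ˢ S) :
    #A ≤ ∑ ℓ ∈ A.image fun pq => lineThrough pq.1 pq.2, richness S ℓ ^ 2 := by
  rw [Finset.card_eq_sum_card_image (fun pq => lineThrough pq.1 pq.2) A]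
  refine Finset.sum_le_sum fun ℓ _ => ?_
  rw [richness_eq_card_filter, sq, ← Finset.card_product]
  refine Finset.card_le_card fun pq hpq => ?_
  obtain ⟨hpqA, rfl⟩ := Finset.mem_filter.1 hpq
  obtain ⟨hp, hq⟩ := Finset.mem_product.1 (hA hpqA)
  exact Finset.mem_product.2 ⟨Finset.mem_filter.2 ⟨hp, left_mem_affineSpan_pair ℝ _ _⟩,
    Finset.mem_filter.2 ⟨hq, right_mem_affineSpan_pair ℝ _ _⟩⟩

open scoped Classical in
lemma card_filter_richness_mem_Icc_le (S : Finset (ℝ × ℝ)) {C : ℕ} (hC : 2 ≤ C) (M : ℕ) :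
    (#{pq ∈ S ×ˢ S | richness S (lineThrough pq.1 pq.2) ∈ Icc C M} : ℝ) ≤
      24 * #S * M + 1728 * #S ^ 2 / C := by
  set A : Finset ((ℝ × ℝ) × (ℝ × ℝ)) :=
    {pq ∈ S ×ˢ S | richness S (lineThrough pq.1 pq.2) ∈ Icc C M}
  have hrich : ∀ pq ∈ A, C ≤ richness S (lineThrough pq.1 pq.2) ∧
      richness S (lineThrough pq.1 pq.2) ≤ M := fun pq hpq => (Finset.mem_filter.1 hpq).2
  have hline : ∀ pq ∈ A, IsLine (lineThrough pq.1 pq.2) := fun pq hpq => by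
    refine ⟨pq.1, pq.2, fun heq => ?_, rfl⟩
    have hrich' := hC.trans (hrich pq hpq).1
    rw [← heq] at hrich'
    exact hrich'.not_gt (Nat.lt_succ_of_le (richness_lineThrough_self_le S pq.1))
  calc (#A : ℝ) ≤ ∑ ℓ ∈ A.image fun pq => lineThrough pq.1 pq.2, (richness S ℓ : ℝ) ^ 2 := by
        exact_mod_cast card_le_sum_richness_sq (Finset.filter_subset _ _)
    _ ≤ 24 * #S * M + 1728 * #S ^ 2 / C :=
        sum_richness_sq_le (Finset.forall_mem_image.2 hline) hC
          (Finset.forall_mem_image.2 fun pq hpq => (hrich pq hpq).1)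
          (Finset.forall_mem_image.2 fun pq hpq => (hrich pq hpq).2)

open scoped Classical in
theorem badpairs_general {P Q : Finset (ℝ × ℝ)} {n : ℕ} (hP : #P ≤ n) (hQ : #Q ≤ n) {K : ℝ}
    (hK : 0 < K) :
    (#{pq ∈ P ×ˢ Q | 1 / K ≤ (richness (P ∪ Q) (lineThrough pq.1 pq.2) : ℝ) ∧
      (richness (P ∪ Q) (lineThrough pq.1 pq.2) : ℝ) ≤ K * n} : ℝ) ≤ 6960 * K * n ^ 2 := by
  rcases le_or_gt 1 K with hK1 | hK1
  · calc _ ≤ (#(P ×ˢ Q) : ℝ) := by exact_mod_cast Finset.card_filter_le _ _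
      _ ≤ 1 * (n : ℝ) ^ 2 := by
        rw [one_mul, sq, Finset.card_product]
        exact_mod_cast Nat.mul_le_mul hP hQ
      _ ≤ 6960 * K * n ^ 2 := by gcongr; linarith
  have hsub : P ×ˢ Q ⊆ (P ∪ Q) ×ˢ (P ∪ Q) :=
    Finset.product_subset_product Finset.subset_union_left Finset.subset_union_right
  have hcard : (#(P ∪ Q) : ℝ) ≤ 2 * n := by
    exact_mod_cast (Finset.card_union_le P Q).trans (by omega)
  have hceil : 2 ≤ ⌈1 / K⌉₊ := Nat.lt_ceil.2 (by rw [Nat.cast_one]; exact one_lt_one_div hK hK1)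
  have hinv : (⌈1 / K⌉₊ : ℝ)⁻¹ ≤ K := inv_le_of_inv_le₀ hK (one_div K ▸ Nat.le_ceil _)
  have hfloor : (⌊K * n⌋₊ : ℝ) ≤ K * n := Nat.floor_le (by positivity)
  calc _ = (#{pq ∈ P ×ˢ Q |
          richness (P ∪ Q) (lineThrough pq.1 pq.2) ∈ Icc ⌈1 / K⌉₊ ⌊K * n⌋₊} : ℝ) := by
        simp only [mem_Icc, Nat.ceil_le, Nat.le_floor_iff (by positivity : 0 ≤ K * n)]
    _ ≤ (#{pq ∈ (P ∪ Q) ×ˢ (P ∪ Q) |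
          richness (P ∪ Q) (lineThrough pq.1 pq.2) ∈ Icc ⌈1 / K⌉₊ ⌊K * n⌋₊} : ℝ) :=
        Nat.cast_le.2 (Finset.card_le_card (Finset.filter_subset_filter _ hsub))
    _ ≤ 24 * #(P ∪ Q) * ⌊K * n⌋₊ + 1728 * #(P ∪ Q) ^ 2 / ⌈1 / K⌉₊ :=
        card_filter_richness_mem_Icc_le _ hceil _
    _ ≤ 24 * (2 * n) * (K * n) + 1728 * (2 * n) ^ 2 * K := by
        rw [div_eq_mul_inv]
        gcongr
    _ = 6960 * K * n ^ 2 := by ring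

open scoped Classical in
/-- There is `K₁ > 0` so that at most `n²/2` of the `n²` bichromatic pairs induce a
line of richness between `1/K₁` and `K₁ · n`. -/
theorem badpairs :
    ∃ K₁ : ℝ, 0 < K₁ ∧ ∀ (P Q : Finset (ℝ × ℝ)) (n : ℕ),
      Disjoint P Q → P.card = n → Q.card = n →
      ((((P ×ˢ Q).filter fun pq =>
          1 / K₁ ≤ (richness (P ∪ Q) (lineThrough pq.1 pq.2) : ℝ) ∧
          (richness (P ∪ Q) (lineThrough pq.1 pq.2) : ℝ) ≤ K₁ * (n : ℝ)).card : ℝ)) ≤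
        (n : ℝ) ^ 2 / 2 :=
  ⟨1 / 13920, by norm_num, fun _ _ _ _ hP hQ =>
    (badpairs_general hP.le hQ.le (by norm_num)).trans_eq (by ring)⟩
end
end
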